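/- arXiv:2009.12594 — 9 statements merged into one kernel-verified Lean document; each statement's English description precedes it below -/
import Mathlib

section
/- Let w₁, w₂, a > 0 and define G₂(a,w,t) = e^{(w₁+w₂−a)t}/((e^{w₁t}−1)(e^{w₂t}−1)) − 1/(w₁w₂t²) for t > 0. Then the function σ ↦ ∫₀^∞ G₂(a,w,t) t^{σ−1} dt has a zero in the open interval (1,2) if and only if 0 < a < (w₁+w₂)/2. -/
open MeasureTheory Real Set

/-- Definition of the Barnes `G₂` kernel:
`G₂(a, w, t) = e^{(w₁+w₂−a)t}/((e^{w₁t}−1)(e^{w₂t}−1)) − 1/(w₁w₂t²)`. -/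
noncomputable def G₂ (a w₁ w₂ t : ℝ) : ℝ :=
  Real.exp ((w₁ + w₂ - a) * t) / ((Real.exp (w₁ * t) - 1) * (Real.exp (w₂ * t) - 1))
    - 1 / (w₁ * w₂ * t ^ 2)

/-!
If `t ^ α f(t) → L` at `0⁺`, then the Mellin transform `F` of `f` satisfies `(σ - α) F(σ) → L` as
`σ → α⁺`, because the kernels `ε t ^ (ε - 1)` on `(0, δ]` form an approximate identity at `0` as
`ε → 0⁺`; inverting `t` gives the analogue at `∞`. So `F` changes sign on `(α, β)` as soon as the
limits of `t ^ α f(t)` at `0⁺` and of `t ^ β f(t)` at `∞` have opposite signs.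

With `c = (w₁ + w₂) / 2 - a` and `sinhc x = sinh x / x`, the kernel is
`G₂ a w₁ w₂ t = (exp (c t) / (sinhc (w₁ t / 2) sinhc (w₂ t / 2)) - 1) / (w₁ w₂ t²)`.
As `sinhc = 1 + o(x)` at `0`, this gives `t G₂ → c / (w₁ w₂)` at `0⁺`, while
`t² G₂ → -1 / (w₁ w₂)` at `∞`; hence there is a zero when `0 < c`. If `c ≤ 0`, then `G₂ < 0`
everywhere since `1 < sinhc x` for `0 < x`, and there is none.
-/

open Filter Topology Asymptotics

section PowerWeights

variable {E : Type*} [NormedAddCommGroup E] [NormedSpace ℝ E]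

lemma integral_Ioc_mul_rpow_sub_one {ε δ : ℝ} (hε : 0 < ε) (hδ : 0 ≤ δ) :
    ∫ t in Ioc 0 δ, ε * t ^ (ε - 1) = δ ^ ε := by
  rw [← intervalIntegral.integral_of_le hδ, intervalIntegral.integral_const_mul,
    integral_rpow (Or.inl (by linarith)), sub_add_cancel, zero_rpow hε.ne', sub_zero,
    mul_div_cancel₀ _ hε.ne']

lemma tendstoUniformlyOn_mul_rpow_sub_one {r : ℝ} (hr : 0 < r) :
    TendstoUniformlyOn (fun ε t : ℝ => ε * t ^ (ε - 1)) 0 (𝓝[>] 0) (Ici r) := by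
  have hlim : Tendsto (fun ε : ℝ => ε * r ^ (ε - 1)) (𝓝[>] 0) (𝓝 0) := by
    have hcont : Continuous fun ε : ℝ => ε * r ^ (ε - 1) :=
      continuous_id.mul (continuous_const.rpow (by fun_prop) fun _ => Or.inl hr.ne')
    simpa using (hcont.tendsto 0).mono_left nhdsWithin_le_nhds
  rw [Metric.tendstoUniformlyOn_iff]
  intro η hη
  filter_upwards [hlim.eventually_lt_const hη, Ioo_mem_nhdsGT one_pos] with ε hεη hε t ht
  have ht0 : 0 < t := hr.trans_le ht
  have hnonneg : 0 ≤ ε * t ^ (ε - 1) := mul_nonneg hε.1.le (rpow_nonneg ht0.le _)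
  rw [Pi.zero_apply, dist_zero_left, norm_of_nonneg hnonneg]
  exact (mul_le_mul_of_nonneg_left (rpow_le_rpow_of_nonpos hr ht (by linarith [hε.2]))
    hε.1.le).trans_lt hεη

lemma tendsto_integral_Ioc_mul_rpow_sub_one_smul [CompleteSpace E] {g : ℝ → E} {δ : ℝ} {L : E}
    (hδ : 0 < δ) (hg : IntegrableOn g (Ioc 0 δ)) (hL : Tendsto g (𝓝[>] 0) (𝓝 L)) :
    Tendsto (fun ε : ℝ => ∫ t in Ioc 0 δ, (ε * t ^ (ε - 1)) • g t) (𝓝[>] 0) (𝓝 L) := by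
  refine tendsto_setIntegral_peak_smul_of_integrableOn_of_tendsto (x₀ := 0) measurableSet_Ioc
    measurableSet_Ioc subset_rfl self_mem_nhdsWithin (by simp) ?_ ?_ ?_ ?_ hg
    (by rwa [nhdsWithin_Ioc_eq_nhdsGT hδ])
  · filter_upwards [self_mem_nhdsWithin] with ε (hε : 0 < ε) t ht
    exact mul_nonneg hε.le (rpow_nonneg ht.1.le _)
  · intro u hu h0
    obtain ⟨r, hr, hru⟩ := Metric.isOpen_iff.1 hu 0 h0
    refine (tendstoUniformlyOn_mul_rpow_sub_one hr).mono fun t ⟨ht, htu⟩ => ?_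
    by_contra hlt
    exact htu (hru (by simpa [abs_of_pos ht.1] using hlt))
  · have hpow : Tendsto (fun ε : ℝ => δ ^ ε) (𝓝[>] 0) (𝓝 1) := by
      simpa using ((continuous_const_rpow hδ.ne').tendsto 0).mono_left nhdsWithin_le_nhds
    refine hpow.congr' ?_
    filter_upwards [self_mem_nhdsWithin] with ε hε
    exact (integral_Ioc_mul_rpow_sub_one hε hδ.le).symm
  · exact Eventually.of_forall fun ε => by fun_prop

lemma norm_integral_Ioi_rpow_smul_le {f : ℝ → E} {σ σ₀ δ : ℝ} (hδ : 0 < δ) (hσ : σ ≤ σ₀)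
    (hf : IntegrableOn (fun t => t ^ (σ₀ - 1) • f t) (Ioi δ)) :
    ‖∫ t in Ioi δ, t ^ (σ - 1) • f t‖ ≤
      δ ^ (σ - σ₀) * ∫ t in Ioi δ, ‖t ^ (σ₀ - 1) • f t‖ := by
  rw [← integral_const_mul]
  refine norm_integral_le_of_norm_le (hf.norm.const_mul _) ?_
  filter_upwards [ae_restrict_mem measurableSet_Ioi] with t (ht : δ < t)
  have ht0 : 0 < t := hδ.trans ht
  have hsplit : t ^ (σ - 1) = t ^ (σ - σ₀) * t ^ (σ₀ - 1) := by
    rw [← rpow_add ht0]; ring_nf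
  rw [hsplit, mul_smul, norm_smul, norm_of_nonneg (rpow_nonneg ht0.le _)]
  exact mul_le_mul_of_nonneg_right (rpow_le_rpow_of_nonpos hδ ht.le (by linarith)) (norm_nonneg _)

lemma tendsto_sub_smul_integral_Ioi_rpow_smul {f : ℝ → E} {α σ₀ δ : ℝ} (hδ : 0 < δ) (hα : α < σ₀)
    (hf : IntegrableOn (fun t => t ^ (σ₀ - 1) • f t) (Ioi δ)) :
    Tendsto (fun σ : ℝ => (σ - α) • ∫ t in Ioi δ, t ^ (σ - 1) • f t) (𝓝[>] α) (𝓝 0) := by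
  set C := ∫ t in Ioi δ, ‖t ^ (σ₀ - 1) • f t‖
  have hlim : Tendsto (fun σ : ℝ => (σ - α) * (δ ^ (σ - σ₀) * C)) (𝓝[>] α) (𝓝 0) := by
    have hcont : Continuous fun σ : ℝ => (σ - α) * (δ ^ (σ - σ₀) * C) :=
      (by fun_prop : Continuous fun σ : ℝ => σ - α).mul
        ((continuous_const.rpow (by fun_prop) fun _ => Or.inl hδ.ne').mul continuous_const)
    simpa using (hcont.tendsto α).mono_left nhdsWithin_le_nhds
  refine squeeze_zero_norm' ?_ hlim
  filter_upwards [Ioo_mem_nhdsGT hα] with σ hσ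
  have hnonneg : 0 ≤ σ - α := by linarith [hσ.1]
  rw [norm_smul, norm_of_nonneg hnonneg]
  exact mul_le_mul_of_nonneg_left (norm_integral_Ioi_rpow_smul_le hδ hσ.2.le hf) hnonneg

lemma exists_integrableOn_Ioc_rpow_smul {f : ℝ → E} {α σ₀ : ℝ} {L : E}
    (hf : IntegrableOn (fun t => t ^ (σ₀ - 1) • f t) (Ioi 0))
    (hL : Tendsto (fun t => t ^ α • f t) (𝓝[>] 0) (𝓝 L)) :
    ∃ δ > 0, IntegrableOn (fun t => t ^ α • f t) (Ioc 0 δ) := by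
  have hmeas : AEStronglyMeasurable (fun t => t ^ α • f t) (volume.restrict (Ioi 0)) := by
    have hrpow : AEStronglyMeasurable (fun t : ℝ => t ^ (α - σ₀ + 1))
        (volume.restrict (Ioi 0)) := by
      fun_prop
    refine (hrpow.smul hf.aestronglyMeasurable).congr ?_
    filter_upwards [ae_restrict_mem measurableSet_Ioi] with t (ht : 0 < t)
    rw [Pi.smul_apply', smul_smul, ← rpow_add ht]
    ring_nf
  obtain ⟨s, hs, hint⟩ := hL.integrableAtFilter ⟨_, self_mem_nhdsWithin, hmeas⟩
    (volume.finiteAt_nhdsWithin 0 _)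
  obtain ⟨δ, hδ, hδs⟩ := mem_nhdsGT_iff_exists_Ioc_subset.1 hs
  exact ⟨δ, hδ, hint.mono_set hδs⟩

lemma isBigO_rpow_neg_of_tendsto_rpow_smul {f : ℝ → E} {l : Filter ℝ} {α : ℝ} {L : E}
    (hl : ∀ᶠ t in l, 0 < t) (hf : Tendsto (fun t => t ^ α • f t) l (𝓝 L)) :
    f =O[l] fun t => t ^ (-α) := by
  refine ((isBigO_refl (fun t : ℝ => t ^ (-α)) l).smul (hf.isBigO_one ℝ)).congr' ?_ ?_
  · filter_upwards [hl] with t ht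
    rw [smul_smul, ← rpow_add ht, neg_add_cancel, rpow_zero, one_smul]
  · simp

end PowerWeights

section Mellin

variable {E : Type*} [NormedAddCommGroup E] [NormedSpace ℂ E]

lemma cpow_ofReal_sub_one_smul {σ t : ℝ} (ht : 0 ≤ t) (x : E) :
    (t : ℂ) ^ ((σ : ℂ) - 1) • x = t ^ (σ - 1) • x := by
  rw [← Complex.coe_smul, Complex.ofReal_cpow ht, Complex.ofReal_sub, Complex.ofReal_one]

lemma mellin_ofReal (f : ℝ → E) (σ : ℝ) :
    mellin f σ = ∫ t in Ioi (0 : ℝ), t ^ (σ - 1) • f t :=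
  setIntegral_congr_fun measurableSet_Ioi fun _ ht => cpow_ofReal_sub_one_smul (le_of_lt ht) _

lemma mellinConvergent_ofReal_iff {f : ℝ → E} {σ : ℝ} :
    MellinConvergent f σ ↔ IntegrableOn (fun t : ℝ => t ^ (σ - 1) • f t) (Ioi 0) :=
  integrableOn_congr_fun (fun _ ht => cpow_ofReal_sub_one_smul (le_of_lt ht) _) measurableSet_Ioi

theorem tendsto_sub_smul_mellin_nhdsGT [CompleteSpace E] {f : ℝ → E} {α : ℝ} {L : E}
    (hf : ∀ᶠ σ : ℝ in 𝓝[>] α, MellinConvergent f σ)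
    (hL : Tendsto (fun t => t ^ α • f t) (𝓝[>] 0) (𝓝 L)) :
    Tendsto (fun σ : ℝ => (σ - α) • mellin f σ) (𝓝[>] α) (𝓝 L) := by
  obtain ⟨σ₀, hf₀, hσ₀ : α < σ₀⟩ := (hf.and self_mem_nhdsWithin).exists
  rw [mellinConvergent_ofReal_iff] at hf₀
  obtain ⟨δ, hδ, hint⟩ := exists_integrableOn_Ioc_rpow_smul hf₀ hL
  have hshift : Tendsto (fun σ : ℝ => σ - α) (𝓝[>] α) (𝓝[>] 0) := by
    refine tendsto_nhdsWithin_iff.2 ⟨?_, ?_⟩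
    · simpa using ((continuous_sub_right α).tendsto α).mono_left nhdsWithin_le_nhds
    · filter_upwards [self_mem_nhdsWithin] with σ (hσ : α < σ) using sub_pos.2 hσ
  have hhead := (tendsto_integral_Ioc_mul_rpow_sub_one_smul hδ hint hL).comp hshift
  have htail := tendsto_sub_smul_integral_Ioi_rpow_smul hδ hσ₀
    (hf₀.mono_set (Ioi_subset_Ioi hδ.le))
  rw [← add_zero L]
  refine (hhead.add htail).congr' ?_
  filter_upwards [hf] with σ hfσ
  rw [mellinConvergent_ofReal_iff] at hfσ
  have hkernel : (σ - α) • ∫ t in Ioc 0 δ, t ^ (σ - 1) • f t =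
      ∫ t in Ioc 0 δ, ((σ - α) * t ^ (σ - α - 1)) • t ^ α • f t := by
    rw [← integral_smul]
    refine setIntegral_congr_fun measurableSet_Ioc fun t ht => ?_
    rw [mul_smul, smul_smul (t ^ _), ← rpow_add ht.1]
    ring_nf
  rw [mellin_ofReal, ← Ioc_union_Ioi_eq_Ioi hδ.le, setIntegral_union (Ioc_disjoint_Ioi le_rfl)
    measurableSet_Ioi (hfσ.mono_set Ioc_subset_Ioi_self) (hfσ.mono_set (Ioi_subset_Ioi hδ.le)),
    smul_add, hkernel, Function.comp_apply]

lemma mellinConvergent_comp_inv {f : ℝ → E} {s : ℂ} :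
    MellinConvergent (fun t => f t⁻¹) s ↔ MellinConvergent f (-s) := by
  simpa [rpow_neg_one, div_neg] using
    MellinConvergent.comp_rpow (f := f) (s := s) (a := -1) (by norm_num)

theorem tendsto_sub_smul_mellin_nhdsLT [CompleteSpace E] {f : ℝ → E} {β : ℝ} {K : E}
    (hf : ∀ᶠ σ : ℝ in 𝓝[<] β, MellinConvergent f σ)
    (hK : Tendsto (fun t => t ^ β • f t) atTop (𝓝 K)) :
    Tendsto (fun σ : ℝ => (β - σ) • mellin f σ) (𝓝[<] β) (𝓝 K) := by
  have hinv : ∀ᶠ σ : ℝ in 𝓝[>] (-β), MellinConvergent (fun t => f t⁻¹) σ := by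
    filter_upwards [tendsto_neg_nhdsGT_neg.eventually hf] with σ hσ
    exact mellinConvergent_comp_inv.2 (by simpa using hσ)
  have hK' : Tendsto (fun t : ℝ => t ^ (-β) • f t⁻¹) (𝓝[>] 0) (𝓝 K) := by
    refine (hK.comp tendsto_inv_nhdsGT_zero).congr' ?_
    filter_upwards [self_mem_nhdsWithin] with t (ht : 0 < t)
    rw [Function.comp_apply, inv_rpow ht.le, rpow_neg ht.le]
  refine ((tendsto_sub_smul_mellin_nhdsGT hinv hK').comp tendsto_neg_nhdsLT).congr fun σ => ?_
  simp [mellin_comp_inv, neg_add_eq_sub]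

end Mellin

section RealMellin

variable {f : ℝ → ℝ} {α β L K : ℝ}

lemma integral_mul_rpow_eq_re_mellin (f : ℝ → ℝ) (σ : ℝ) :
    ∫ t in Ioi (0 : ℝ), f t * t ^ (σ - 1) = (mellin (fun t => (f t : ℂ)) σ).re := by
  have hmellin : mellin (fun t => (f t : ℂ)) σ = ↑(∫ t in Ioi (0 : ℝ), f t * t ^ (σ - 1)) := by
    rw [mellin_ofReal, ← integral_complex_ofReal]
    simp [mul_comm]
  rw [hmellin, Complex.ofReal_re]

lemma integrableOn_mul_rpow_of_tendsto (hf : LocallyIntegrableOn f (Ioi 0))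
    (hL : Tendsto (fun t => t ^ α * f t) (𝓝[>] 0) (𝓝 L))
    (hK : Tendsto (fun t => t ^ β * f t) atTop (𝓝 K)) {σ : ℝ} (hσ : σ ∈ Ioo α β) :
    IntegrableOn (fun t => f t * t ^ (σ - 1)) (Ioi 0) := by
  simpa only [mul_comm] using mellin_convergent_of_isBigO_scalar hf
    (isBigO_rpow_neg_of_tendsto_rpow_smul (eventually_gt_atTop 0) hK) hσ.2
    (isBigO_rpow_neg_of_tendsto_rpow_smul self_mem_nhdsWithin hL) hσ.1

lemma mellinConvergent_ofReal_comp_of_tendsto (hf : LocallyIntegrableOn f (Ioi 0))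
    (hL : Tendsto (fun t => t ^ α * f t) (𝓝[>] 0) (𝓝 L))
    (hK : Tendsto (fun t => t ^ β * f t) atTop (𝓝 K)) {σ : ℝ} (hσ : σ ∈ Ioo α β) :
    MellinConvergent (fun t => (f t : ℂ)) σ := by
  rw [mellinConvergent_ofReal_iff]
  simpa [IntegrableOn, mul_comm] using
    (integrableOn_mul_rpow_of_tendsto hf hL hK hσ).ofReal (𝕜 := ℂ)

lemma continuousOn_integral_mul_rpow_of_tendsto (hf : LocallyIntegrableOn f (Ioi 0))
    (hL : Tendsto (fun t => t ^ α * f t) (𝓝[>] 0) (𝓝 L))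
    (hK : Tendsto (fun t => t ^ β * f t) atTop (𝓝 K)) :
    ContinuousOn (fun σ => ∫ t in Ioi (0 : ℝ), f t * t ^ (σ - 1)) (Ioo α β) := by
  have htop := isBigO_rpow_neg_of_tendsto_rpow_smul (eventually_gt_atTop 0) hK
  have hbot := isBigO_rpow_neg_of_tendsto_rpow_smul self_mem_nhdsWithin hL
  have hlocal : LocallyIntegrableOn (fun t => (f t : ℂ)) (Ioi 0) :=
    fun t ht => let ⟨s, hs, hint⟩ := hf t ht; ⟨s, hs, hint.ofReal⟩
  simp only [integral_mul_rpow_eq_re_mellin]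
  intro σ hσ
  have hdiff : DifferentiableAt ℂ (mellin fun t => (f t : ℂ)) σ :=
    mellin_differentiableAt_of_isBigO_rpow hlocal (Complex.isBigO_ofReal_left.2 htop) hσ.2
      (Complex.isBigO_ofReal_left.2 hbot) hσ.1
  exact (Complex.continuous_re.continuousAt.comp
    (hdiff.continuousAt.comp (f := Complex.ofReal)
      Complex.continuous_ofReal.continuousAt)).continuousWithinAt

lemma tendsto_rpow_smul_ofReal {l : Filter ℝ} (hL : Tendsto (fun t => t ^ α * f t) l (𝓝 L)) :
    Tendsto (fun t => t ^ α • (f t : ℂ)) l (𝓝 (L : ℂ)) := by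
  simpa using hL.ofReal

theorem tendsto_sub_mul_integral_mul_rpow_nhdsGT (hαβ : α < β)
    (hf : LocallyIntegrableOn f (Ioi 0))
    (hL : Tendsto (fun t => t ^ α * f t) (𝓝[>] 0) (𝓝 L))
    (hK : Tendsto (fun t => t ^ β * f t) atTop (𝓝 K)) :
    Tendsto (fun σ => (σ - α) * ∫ t in Ioi (0 : ℝ), f t * t ^ (σ - 1)) (𝓝[>] α) (𝓝 L) := by
  have hconv : ∀ᶠ σ : ℝ in 𝓝[>] α, MellinConvergent (fun t => (f t : ℂ)) σ := by
    filter_upwards [Ioo_mem_nhdsGT hαβ] with σ hσ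
      using mellinConvergent_ofReal_comp_of_tendsto hf hL hK hσ
  simpa [integral_mul_rpow_eq_re_mellin, Function.comp_def] using
    (Complex.continuous_re.tendsto _).comp
      (tendsto_sub_smul_mellin_nhdsGT hconv (tendsto_rpow_smul_ofReal hL))

theorem tendsto_sub_mul_integral_mul_rpow_nhdsLT (hαβ : α < β)
    (hf : LocallyIntegrableOn f (Ioi 0))
    (hL : Tendsto (fun t => t ^ α * f t) (𝓝[>] 0) (𝓝 L))
    (hK : Tendsto (fun t => t ^ β * f t) atTop (𝓝 K)) :
    Tendsto (fun σ => (β - σ) * ∫ t in Ioi (0 : ℝ), f t * t ^ (σ - 1)) (𝓝[<] β) (𝓝 K) := by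
  have hconv : ∀ᶠ σ : ℝ in 𝓝[<] β, MellinConvergent (fun t => (f t : ℂ)) σ := by
    filter_upwards [Ioo_mem_nhdsLT hαβ] with σ hσ
      using mellinConvergent_ofReal_comp_of_tendsto hf hL hK hσ
  simpa [integral_mul_rpow_eq_re_mellin, Function.comp_def] using
    (Complex.continuous_re.tendsto _).comp
      (tendsto_sub_smul_mellin_nhdsLT hconv (tendsto_rpow_smul_ofReal hK))

theorem exists_integral_mul_rpow_eq_zero (hαβ : α < β) (hf : LocallyIntegrableOn f (Ioi 0))
    (hL : Tendsto (fun t => t ^ α * f t) (𝓝[>] 0) (𝓝 L)) (hL0 : 0 < L)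
    (hK : Tendsto (fun t => t ^ β * f t) atTop (𝓝 K)) (hK0 : K < 0) :
    ∃ σ ∈ Ioo α β, ∫ t in Ioi (0 : ℝ), f t * t ^ (σ - 1) = 0 := by
  obtain ⟨p, hp_pos, hp⟩ := (((tendsto_sub_mul_integral_mul_rpow_nhdsGT hαβ hf hL hK
    ).eventually_const_lt hL0).and (Ioo_mem_nhdsGT hαβ)).exists
  obtain ⟨n, hn_neg, hn⟩ := (((tendsto_sub_mul_integral_mul_rpow_nhdsLT hαβ hf hL hK
    ).eventually_lt_const hK0).and (Ioo_mem_nhdsLT hαβ)).exists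
  exact isPreconnected_Ioo.intermediate_value hn hp
    (continuousOn_integral_mul_rpow_of_tendsto hf hL hK)
    ⟨(neg_of_mul_neg_right hn_neg (sub_pos.2 hn.2).le).le,
      (pos_of_mul_pos_right hp_pos (sub_pos.2 hp.1).le).le⟩

end RealMellin

lemma setIntegral_neg_of_forall_neg {X : Type*} [MeasurableSpace X] {μ : Measure X} {s : Set X}
    {f : X → ℝ} (hs : MeasurableSet s) (hμ : μ s ≠ 0) (hf : IntegrableOn f s μ)
    (hneg : ∀ x ∈ s, f x < 0) : ∫ x in s, f x ∂μ < 0 := by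
  have hnonneg : 0 ≤ᵐ[μ.restrict s] fun x => -f x := by
    filter_upwards [ae_restrict_mem hs] with x hx using (neg_pos.2 (hneg x hx)).le
  have hsupp : Function.support (fun x => -f x) ∩ s = s :=
    inter_eq_right.2 fun x hx => (neg_pos.2 (hneg x hx)).ne'
  have hpos : 0 < ∫ x in s, -f x ∂μ := by
    rw [setIntegral_pos_iff_support_of_nonneg_ae hnonneg hf.neg, hsupp]
    exact pos_iff_ne_zero.2 hμ
  rwa [integral_neg, neg_pos] at hpos

section Sinhc

/-- The hyperbolic cardinal sine `sinh x / x`, extended by its limit `1` at `0`. It carries the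
deviation of `exp x - 1` from `x * exp (x / 2)`, see `exp_sub_one_eq_mul_sinhc`. -/
noncomputable def sinhc (x : ℝ) : ℝ := if x = 0 then 1 else sinh x / x

lemma sinhc_zero : sinhc 0 = 1 := if_pos rfl

lemma mul_sinhc (x : ℝ) : x * sinhc x = sinh x := by
  rcases eq_or_ne x 0 with rfl | hx
  · simp
  · rw [sinhc, if_neg hx, mul_div_cancel₀ _ hx]

lemma one_lt_sinhc {x : ℝ} (hx : 0 < x) : 1 < sinhc x := by
  rw [sinhc, if_neg hx.ne', one_lt_div hx]
  exact self_lt_sinh_iff.2 hx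

lemma exp_sub_one_eq_mul_sinhc (x : ℝ) : exp x - 1 = x * exp (x / 2) * sinhc (x / 2) := by
  have hhalf : x * sinhc (x / 2) = 2 * sinh (x / 2) := by rw [← mul_sinhc]; ring
  calc exp x - 1 = exp (x / 2) * (2 * sinh (x / 2)) := by
        rw [sinh_eq, mul_div_cancel₀ _ two_ne_zero, mul_sub, ← exp_add, ← exp_add]
        simp
    _ = x * exp (x / 2) * sinhc (x / 2) := by rw [← hhalf]; ring

lemma sinh_sub_self_isLittleO : (fun x => sinh x - x) =o[𝓝 0] fun x => x ^ 2 := by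
  have hexp : (fun x => exp x - (1 + x + x ^ 2 / 2)) =o[𝓝 0] fun x => x ^ 2 := by
    simpa [Finset.sum_range_succ] using exp_sub_sum_range_succ_isLittleO_pow 2
  have hneg : (fun x => exp (-x) - (1 + -x + (-x) ^ 2 / 2)) =o[𝓝 0] fun x => (-x) ^ 2 :=
    hexp.comp_tendsto (by simpa using (continuous_neg (G := ℝ)).tendsto 0)
  simp only [neg_sq] at hneg
  refine ((hexp.sub hneg).const_mul_left (1 / 2)).congr_left fun x => ?_
  rw [sinh_eq]
  ring

lemma hasDerivAt_sinhc_zero : HasDerivAt sinhc 0 0 := by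
  rw [hasDerivAt_iff_tendsto_slope]
  refine (sinh_sub_self_isLittleO.tendsto_div_nhds_zero.mono_left nhdsWithin_le_nhds).congr' ?_
  filter_upwards [self_mem_nhdsWithin] with x (hx : x ≠ 0)
  rw [slope_def_field, sinhc_zero, ← mul_sinhc]
  field_simp
  ring

end Sinhc

section BarnesKernel

variable {a w₁ w₂ : ℝ}

lemma G₂_eq_sinhc (a w₁ w₂ t : ℝ) :
    G₂ a w₁ w₂ t =
      (exp (((w₁ + w₂) / 2 - a) * t) / (sinhc (w₁ * t / 2) * sinhc (w₂ * t / 2)) - 1) /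
        (w₁ * w₂ * t ^ 2) := by
  have hexp : exp ((w₁ + w₂ - a) * t) =
      exp (((w₁ + w₂) / 2 - a) * t) * (exp (w₁ * t / 2) * exp (w₂ * t / 2)) := by
    rw [← exp_add, ← exp_add]; ring_nf
  rw [G₂, exp_sub_one_eq_mul_sinhc, exp_sub_one_eq_mul_sinhc, hexp]
  field_simp

lemma G₂_neg (hw₁ : 0 < w₁) (hw₂ : 0 < w₂) (ha : (w₁ + w₂) / 2 ≤ a) {t : ℝ} (ht : 0 < t) :
    G₂ a w₁ w₂ t < 0 := by
  have hnum : exp (((w₁ + w₂) / 2 - a) * t) ≤ 1 :=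
    exp_le_one_iff.2 (mul_nonpos_of_nonpos_of_nonneg (sub_nonpos.2 ha) ht.le)
  have hden : 1 < sinhc (w₁ * t / 2) * sinhc (w₂ * t / 2) :=
    one_lt_mul_of_lt_of_le (one_lt_sinhc (by positivity)) (one_lt_sinhc (by positivity)).le
  rw [G₂_eq_sinhc]
  refine div_neg_of_neg_of_pos (sub_neg.2 ?_) (by positivity)
  rw [div_lt_one (by linarith)]
  exact hnum.trans_lt hden

lemma hasDerivAt_exp_div_sinhc_mul_sinhc (c b₁ b₂ : ℝ) :
    HasDerivAt (fun t => exp (c * t) / (sinhc (b₁ * t / 2) * sinhc (b₂ * t / 2))) c 0 := by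
  have hexp : HasDerivAt (fun t => exp (c * t)) c 0 := by
    simpa using ((hasDerivAt_id (0 : ℝ)).const_mul c).exp
  have hsinhc (b : ℝ) : HasDerivAt (fun t => sinhc (b * t / 2)) 0 0 := by
    have hlin : HasDerivAt (fun t => b * t / 2) (b / 2) 0 := by
      simpa using ((hasDerivAt_id (0 : ℝ)).const_mul b).div_const 2
    simpa [Function.comp_def] using HasDerivAt.comp_of_eq 0 hasDerivAt_sinhc_zero hlin (by simp)
  simpa [sinhc_zero] using
    hexp.fun_div ((hsinhc b₁).fun_mul (hsinhc b₂)) (by simp [sinhc_zero])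

lemma tendsto_mul_G₂_nhdsGT_zero (a w₁ w₂ : ℝ) :
    Tendsto (fun t => t * G₂ a w₁ w₂ t) (𝓝[>] 0) (𝓝 (((w₁ + w₂) / 2 - a) / (w₁ * w₂))) := by
  have hslope := (hasDerivAt_iff_tendsto_slope.1
    (hasDerivAt_exp_div_sinhc_mul_sinhc ((w₁ + w₂) / 2 - a) w₁ w₂)).mono_left
      (nhdsWithin_mono 0 fun t (ht : 0 < t) => ht.ne')
  refine (hslope.div_const (w₁ * w₂)).congr' ?_
  filter_upwards [self_mem_nhdsWithin] with t (ht : 0 < t)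
  rw [G₂_eq_sinhc, slope_def_field]
  simp only [mul_zero, zero_div, exp_zero, sinhc_zero, mul_one, div_one, sub_zero]
  field_simp

lemma tendsto_exp_div_exp_sub_one_atTop :
    Tendsto (fun x : ℝ => exp x / (exp x - 1)) atTop (𝓝 1) := by
  have hlim : Tendsto (fun x : ℝ => 1 + (exp x - 1)⁻¹) atTop (𝓝 1) := by
    simpa [sub_eq_add_neg] using
      (tendsto_atTop_add_const_right _ (-1) tendsto_exp_atTop).inv_tendsto_atTop.const_add 1
  refine hlim.congr' ?_
  filter_upwards [eventually_gt_atTop 0] with x hx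
  have hne : exp x - 1 ≠ 0 := (sub_pos.2 (one_lt_exp_iff.2 hx)).ne'
  field_simp
  ring

lemma tendsto_sq_mul_G₂_atTop (hw₁ : 0 < w₁) (hw₂ : 0 < w₂) (ha : 0 < a) :
    Tendsto (fun t => t ^ 2 * G₂ a w₁ w₂ t) atTop (𝓝 (-(1 / (w₁ * w₂)))) := by
  have hdecay : Tendsto (fun t : ℝ => t ^ 2 * exp (-a * t)) atTop (𝓝 0) := by
    simpa using tendsto_rpow_mul_exp_neg_mul_atTop_nhds_zero 2 a ha
  have hfactor {w : ℝ} (hw : 0 < w) :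
      Tendsto (fun t => exp (w * t) / (exp (w * t) - 1)) atTop (𝓝 1) :=
    tendsto_exp_div_exp_sub_one_atTop.comp (tendsto_id.const_mul_atTop hw)
  have hlim := ((hdecay.mul (hfactor hw₁)).mul (hfactor hw₂)).sub_const (1 / (w₁ * w₂))
  simp only [mul_one, zero_sub] at hlim
  refine hlim.congr' ?_
  filter_upwards [eventually_ne_atTop 0] with t ht
  have hexp : exp ((w₁ + w₂ - a) * t) = exp (-a * t) * exp (w₁ * t) * exp (w₂ * t) := by
    rw [← exp_add, ← exp_add]; ring_nf
  rw [G₂, hexp]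
  field_simp

lemma continuousOn_G₂ (a : ℝ) (hw₁ : 0 < w₁) (hw₂ : 0 < w₂) :
    ContinuousOn (G₂ a w₁ w₂) (Ioi 0) := by
  have hexp {w t : ℝ} (hw : 0 < w) (ht : 0 < t) : exp (w * t) - 1 ≠ 0 :=
    (sub_pos.2 (one_lt_exp_iff.2 (mul_pos hw ht))).ne'
  refine ContinuousOn.sub (ContinuousOn.div (by fun_prop) (by fun_prop) fun t ht => ?_)
    (ContinuousOn.div (by fun_prop) (by fun_prop) fun t (ht : 0 < t) => by positivity)
  exact mul_ne_zero (hexp hw₁ ht) (hexp hw₂ ht)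

end BarnesKernel

theorem stmt0 (w₁ w₂ a : ℝ) (hw₁ : 0 < w₁) (hw₂ : 0 < w₂) (ha : 0 < a) :
    (∃ σ ∈ Set.Ioo (1 : ℝ) 2,
        ∫ t in Set.Ioi (0 : ℝ), G₂ a w₁ w₂ t * t ^ (σ - 1) = 0) ↔
      a < (w₁ + w₂) / 2 := by
  have hlocal : LocallyIntegrableOn (G₂ a w₁ w₂) (Ioi 0) :=
    (continuousOn_G₂ a hw₁ hw₂).locallyIntegrableOn measurableSet_Ioi
  have hzero : Tendsto (fun t => t ^ (1 : ℝ) * G₂ a w₁ w₂ t) (𝓝[>] 0)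
      (𝓝 (((w₁ + w₂) / 2 - a) / (w₁ * w₂))) := by
    simpa only [rpow_one] using tendsto_mul_G₂_nhdsGT_zero a w₁ w₂
  have htop : Tendsto (fun t => t ^ (2 : ℝ) * G₂ a w₁ w₂ t) atTop (𝓝 (-(1 / (w₁ * w₂)))) := by
    simpa only [rpow_two] using tendsto_sq_mul_G₂_atTop hw₁ hw₂ ha
  constructor
  · rintro ⟨σ, hσ, hroot⟩
    by_contra! hle
    refine (setIntegral_neg_of_forall_neg measurableSet_Ioi (by simp)
      (integrableOn_mul_rpow_of_tendsto hlocal hzero htop hσ) fun t ht => ?_).ne hroot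
    exact mul_neg_of_neg_of_pos (G₂_neg hw₁ hw₂ hle ht) (rpow_pos_of_pos ht _)
  · intro hlt
    exact exists_integral_mul_rpow_eq_zero one_lt_two hlocal hzero
      (div_pos (sub_pos.2 hlt) (mul_pos hw₁ hw₂)) htop (neg_neg_of_pos (by positivity))
end

section
/- Let w₁, w₂, a > 0 and let s ∈ ℂ with Re(s) > 2. Then Γ(s) · Σ_{m₁=0}^∞ Σ_{m₂=0}^∞ (a + m₁w₁ + m₂w₂)^{−s} = ∫₀^∞ e^{(w₁+w₂−a)t}/((e^{w₁t}−1)(e^{w₂t}−1)) · t^{s−1} dt. -/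
open MeasureTheory Real Set Complex

/-!
The generating function `∑ₘ e^{-(a + m·w)t}` of the shifts `a + m·w`, `m ∈ ℕʳ`, is a product of `r`
geometric series, and the Mellin transform turns each term `e^{-pt}` into `Γ(s) p^{-s}`. Exchanging
sum and integral needs `∑ₘ (a + m·w)^{-σ}` to converge for `σ > r`. Since `a + m·w` dominates each
of the `a + mᵢwᵢ`, hence their geometric mean, the series is dominated by the product of the
one-variable series `∑ₖ (a + k wᵢ)^{-σ/r}`.
-/

section PiSeries

variable {r : ℕ} {β : Fin r → Type*} {R : Type*} [NormedCommRing R] {f : ∀ i, β i → R}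

lemma summable_norm_prod_pi (hf : ∀ i, Summable fun k ↦ ‖f i k‖) :
    Summable fun m : ∀ i, β i ↦ ‖∏ i, f i (m i)‖ := by
  induction r with
  | zero => exact (hasSum_fintype _).summable
  | succ r ih =>
    rw [← (Fin.consEquiv β).summable_iff]
    simpa only [Function.comp_def, Fin.consEquiv_apply, Fin.prod_univ_succ, Fin.cons_zero,
      Fin.cons_succ] using (hf 0).mul_norm (ih fun i ↦ hf i.succ)

lemma hasSum_prod_pi {S : Fin r → R} (hf : ∀ i, Summable fun k ↦ ‖f i k‖)
    (hS : ∀ i, HasSum (f i) (S i)) :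
    HasSum (fun m : ∀ i, β i ↦ ∏ i, f i (m i)) (∏ i, S i) := by
  induction r with
  | zero => simp
  | succ r ih =>
    have hS' := ih (fun i ↦ hf i.succ) fun i ↦ hS i.succ
    have hnorm := summable_norm_prod_pi fun i ↦ hf i.succ
    have hprod := summable_mul_of_summable_norm' (hf 0) (hS 0).summable hnorm hS'.summable
    have hmul := (hS 0).mul hS' hprod
    rw [← (Fin.consEquiv β).hasSum_iff]
    simpa only [Function.comp_def, Fin.consEquiv_apply, Fin.prod_univ_succ, Fin.cons_zero,
      Fin.cons_succ] using hmul

end PiSeries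

lemma tsum_fin_two_arrow {β E : Type*} [NormedAddCommGroup E] [CompleteSpace E]
    {f : (Fin 2 → β) → E} (hf : Summable f) :
    ∑' m, f m = ∑' m₁, ∑' m₂, f ![m₁, m₂] := by
  rw [← (finTwoArrowEquiv β).symm.tsum_eq f]
  exact ((finTwoArrowEquiv β).symm.summable_iff.2 hf).tsum_prod

lemma summable_add_nat_mul_rpow_neg {a w p : ℝ} (ha : 0 ≤ a) (hw : 0 < w) (hp : 1 < p) :
    Summable fun k : ℕ ↦ (a + k * w) ^ (-p) := by
  refine (((Real.summable_one_div_nat_add_rpow (a / w) p).2 hp).mul_left (w ^ (-p))).congr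
    fun k ↦ ?_
  have hk : 0 ≤ k + a / w := by positivity
  rw [abs_of_nonneg hk, one_div, ← Real.rpow_neg hk, ← Real.mul_rpow hw.le hk]
  congr 1
  field_simp
  ring

lemma hasSum_exp_neg_nat_mul {x : ℝ} (hx : 0 < x) :
    HasSum (fun k : ℕ ↦ rexp (-(k * x))) (rexp x / (rexp x - 1)) := by
  have hsum := hasSum_geometric_of_lt_one (Real.exp_pos (-x)).le
    (Real.exp_lt_one_iff.2 (neg_neg_iff_pos.2 hx))
  have hval : (1 - rexp (-x))⁻¹ = rexp x / (rexp x - 1) := by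
    rw [Real.exp_neg, inv_eq_one_div (rexp x), one_sub_div (Real.exp_pos x).ne', inv_div]
  rw [hval] at hsum
  simpa only [← Real.exp_nat_mul, mul_neg] using hsum

section Barnes

variable {r : ℕ} {w : Fin r → ℝ} {a : ℝ}

/-- The Barnes zeta function `ζ_r(s, w, a)` with positive real parameters, as its defining
`r`-fold series; it has this meaning only in the region `r < Re s` of convergence. -/
noncomputable def barnesZeta (s : ℂ) (w : Fin r → ℝ) (a : ℝ) : ℂ :=
  ∑' m : Fin r → ℕ, ((a + ∑ i, m i * w i : ℝ) : ℂ) ^ (-s)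

lemma add_sum_nat_mul_pos (hw : ∀ i, 0 < w i) (ha : 0 < a) (m : Fin r → ℕ) :
    0 < a + ∑ i, m i * w i :=
  add_pos_of_pos_of_nonneg ha <| Finset.sum_nonneg fun i _ ↦ mul_nonneg (m i).cast_nonneg (hw i).le

lemma add_sum_nat_mul_rpow_neg_le_prod (hr : r ≠ 0) (hw : ∀ i, 0 < w i) (ha : 0 < a) {σ : ℝ}
    (hσ : 0 ≤ σ) (m : Fin r → ℕ) :
    (a + ∑ i, m i * w i) ^ (-σ) ≤ ∏ i, (a + m i * w i) ^ (-(σ / r)) := by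
  have hterm (i : Fin r) : 0 ≤ m i * w i := mul_nonneg (m i).cast_nonneg (hw i).le
  have hpos := add_sum_nat_mul_pos hw ha m
  calc (a + ∑ i, m i * w i) ^ (-σ)
      = ∏ _i : Fin r, (a + ∑ j, m j * w j) ^ (-(σ / r)) := by
        rw [Finset.prod_const, Finset.card_univ, Fintype.card_fin, ← Real.rpow_mul_natCast hpos.le]
        congr 1
        field_simp
    _ ≤ ∏ i, (a + m i * w i) ^ (-(σ / r)) := by
        refine Finset.prod_le_prod (fun i _ ↦ by positivity) fun i _ ↦ ?_
        refine Real.rpow_le_rpow_of_nonpos (by linarith [hterm i]) ?_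
          (neg_nonpos.2 (by positivity))
        gcongr
        exact Finset.single_le_sum (fun j _ ↦ hterm j) (Finset.mem_univ i)

lemma summable_add_sum_nat_mul_rpow_neg (hw : ∀ i, 0 < w i) (ha : 0 < a) {σ : ℝ} (hσ : r < σ) :
    Summable fun m : Fin r → ℕ ↦ (a + ∑ i, m i * w i) ^ (-σ) := by
  obtain rfl | hr := eq_or_ne r 0
  · exact (hasSum_fintype _).summable
  have hexponent : 1 < σ / r := (one_lt_div (by positivity)).2 hσ
  have hfactor (i : Fin r) : Summable fun k : ℕ ↦ ‖(a + k * w i) ^ (-(σ / r))‖ :=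
    (summable_add_nat_mul_rpow_neg ha.le (hw i) hexponent).norm
  exact (summable_norm_prod_pi hfactor).of_norm.of_nonneg_of_le
    (fun m ↦ Real.rpow_nonneg (add_sum_nat_mul_pos hw ha m).le _)
    (add_sum_nat_mul_rpow_neg_le_prod hr hw ha (r.cast_nonneg.trans hσ.le))

lemma summable_barnesZeta (hw : ∀ i, 0 < w i) (ha : 0 < a) {s : ℂ} (hs : r < s.re) :
    Summable fun m : Fin r → ℕ ↦ ((a + ∑ i, m i * w i : ℝ) : ℂ) ^ (-s) :=
  .of_norm <| (summable_add_sum_nat_mul_rpow_neg hw ha hs).congr fun m ↦ by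
    rw [Complex.norm_cpow_eq_rpow_re_of_pos (add_sum_nat_mul_pos hw ha m), Complex.neg_re]

lemma barnesZeta_fin_two {w : Fin 2 → ℝ} (hw : ∀ i, 0 < w i) (ha : 0 < a) {s : ℂ}
    (hs : 2 < s.re) :
    barnesZeta s w a =
      ∑' m₁ : ℕ, ∑' m₂ : ℕ, ((a + m₁ * w 0 + m₂ * w 1 : ℝ) : ℂ) ^ (-s) := by
  rw [barnesZeta, tsum_fin_two_arrow (summable_barnesZeta hw ha (mod_cast hs))]
  simp only [Fin.sum_univ_two, Matrix.cons_val_zero, Matrix.cons_val_one, ← add_assoc]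

lemma hasSum_exp_neg_add_sum_nat_mul (hw : ∀ i, 0 < w i) (a : ℝ) {t : ℝ} (ht : 0 < t) :
    HasSum (fun m : Fin r → ℕ ↦ rexp (-(a + ∑ i, m i * w i) * t))
      (rexp ((∑ i, w i - a) * t) / ∏ i, (rexp (w i * t) - 1)) := by
  have hgeom (i : Fin r) := hasSum_exp_neg_nat_mul (mul_pos (hw i) ht)
  have hprod := (hasSum_prod_pi (fun i ↦ (hgeom i).summable.norm) hgeom).mul_left (rexp (-(a * t)))
  convert! hprod using 1
  · ext m
    rw [← Real.exp_sum, ← Real.exp_add, Finset.sum_neg_distrib]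
    simp only [← mul_assoc, ← Finset.sum_mul]
    ring_nf
  · rw [Finset.prod_div_distrib, ← Real.exp_sum, ← Finset.sum_mul, ← mul_div_assoc, ← Real.exp_add]
    ring_nf

theorem stmt3_general (hw : ∀ i, 0 < w i) (ha : 0 < a) {s : ℂ} (hs : r < s.re) :
    Complex.Gamma s * barnesZeta s w a =
      ∫ t in Ioi (0 : ℝ),
        (rexp ((∑ i, w i - a) * t) / ∏ i, (rexp (w i * t) - 1) : ℝ) * (t : ℂ) ^ (s - 1) := by
  have hpos (m : Fin r → ℕ) := add_sum_nat_mul_pos hw ha m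
  have hmellin := hasSum_mellin (a := fun _ ↦ 1) (fun m ↦ .inr (hpos m))
    (r.cast_nonneg.trans_lt hs)
    (fun t ht ↦ by
      simpa only [one_mul] using
        Complex.hasSum_ofReal.2 (hasSum_exp_neg_add_sum_nat_mul hw a (mem_Ioi.1 ht)))
    ((summable_add_sum_nat_mul_rpow_neg hw ha hs).congr fun m ↦ by
      rw [Real.rpow_neg (hpos m).le, norm_one, one_div])
  simpa only [barnesZeta, mellin, smul_eq_mul, mul_one, div_eq_mul_inv, ← Complex.cpow_neg,
    tsum_mul_left, mul_comm] using hmellin.tsum_eq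

end Barnes

theorem stmt3 (w₁ w₂ a : ℝ) (hw₁ : 0 < w₁) (hw₂ : 0 < w₂) (ha : 0 < a)
    (s : ℂ) (hs : 2 < s.re) :
    Complex.Gamma s *
        ∑' m₁ : ℕ, ∑' m₂ : ℕ,
          ((a + m₁ * w₁ + m₂ * w₂ : ℝ) : ℂ) ^ (-s) =
      ∫ t in Set.Ioi (0 : ℝ),
        (Real.exp ((w₁ + w₂ - a) * t) /
            ((Real.exp (w₁ * t) - 1) * (Real.exp (w₂ * t) - 1)) : ℂ) *
          (t : ℂ) ^ (s - 1) := by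
  have hw : ∀ i, 0 < ![w₁, w₂] i := Fin.forall_fin_two.2 ⟨hw₁, hw₂⟩
  simpa [barnesZeta_fin_two hw ha hs] using stmt3_general hw ha (s := s) (mod_cast hs)
end

section
/- Let w₁, w₂, a > 0 and let s ∈ ℂ with Re(s) > 2. Then the double series Σ_{m₁=0}^∞ Σ_{m₂=0}^∞ (a + m₁w₁ + m₂w₂)^{−s} converges absolutely, i.e., the family ((a + m₁w₁ + m₂w₂)^{−s})_{(m₁,m₂)∈ℕ×ℕ} is summable. -/
open MeasureTheory Real Set Complex

/-!
If `0` is not in the convex hull of `w₁, …, w_d`, that hull keeps a distance `c > 0` from the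
origin. For `x ≥ 0`, the vector `∑ xᵢ wᵢ` is `∑ xᵢ` times a point of the hull, so its norm is at
least `c ‖x‖`. On `ℕ^d` a constant shift `a` is negligible against this, and the series is dominated
by `∑ ‖m‖ ^ (-Re s)` over lattice points, which converges for `Re s > d`.
-/

open Filter Asymptotics

lemma isBigO_norm_rpow_of_nonpos {α E F : Type*} [NormedAddCommGroup E] [NormedAddCommGroup F]
    {l : Filter α} {f : α → E} {g : α → F} {r : ℝ} (hr : r ≤ 0) (hf : ∀ᶠ x in l, f x ≠ 0)
    (hfg : f =O[l] g) : (fun x ↦ ‖g x‖ ^ r) =O[l] fun x ↦ ‖f x‖ ^ r := by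
  have isBigO_neg : (fun x ↦ ‖f x‖ ^ (-r)) =O[l] fun x ↦ ‖g x‖ ^ (-r) :=
    hfg.norm_norm.rpow (neg_nonneg.mpr hr) (.of_forall fun _ ↦ norm_nonneg _)
  have isBigO_inv := isBigO_neg.inv_rev <| hf.mono fun x hx h ↦
    absurd h (Real.rpow_pos_of_pos (norm_pos_iff.mpr hx) _).ne'
  simpa only [Real.rpow_neg (norm_nonneg _), inv_inv] using isBigO_inv

section LatticePoints

variable {ι E : Type*}

lemma natCast_mem_span_range_basisFun [Finite ι] (m : ι → ℕ) :
    (fun i ↦ (m i : ℝ)) ∈ Submodule.span ℤ (range (Pi.basisFun ℝ ι)) :=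
  ((Pi.basisFun ℝ ι).mem_span_iff_repr_mem ℤ _).mpr fun i ↦ ⟨m i, by simp⟩

variable [Fintype ι]

lemma summable_norm_rpow_span_range_basisFun {r : ℝ} (hr : r < -Fintype.card ι) :
    Summable fun z : Submodule.span ℤ (range (Pi.basisFun ℝ ι)) ↦ ‖z‖ ^ r := by
  have finrank_eq_card :
      Module.finrank ℤ (Submodule.span ℤ (range (Pi.basisFun ℝ ι))) = Fintype.card ι := by
    rw [ZLattice.rank ℝ, Module.finrank_fintype_fun_eq_card]
  exact ZLattice.summable_norm_rpow _ r (by rwa [finrank_eq_card])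

lemma summable_norm_natCast_pi_rpow {r : ℝ} (hr : r < -Fintype.card ι) :
    Summable fun m : ι → ℕ ↦ ‖fun i ↦ (m i : ℝ)‖ ^ r := by
  have injective_natCast : Function.Injective fun m : ι → ℕ ↦
      (⟨fun i ↦ m i, natCast_mem_span_range_basisFun m⟩ :
        Submodule.span ℤ (range (Pi.basisFun ℝ ι))) := by
    intro _ _ h
    simpa only [Subtype.mk.injEq, funext_iff, Nat.cast_inj] using h
  simpa only [Function.comp_def, Submodule.coe_norm] using
    (summable_norm_rpow_span_range_basisFun hr).comp_injective injective_natCast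

lemma tendsto_norm_natCast_pi_cofinite_atTop :
    Tendsto (fun m : ι → ℕ ↦ ‖fun i ↦ (m i : ℝ)‖) cofinite atTop :=
  tendsto_norm_comp_cofinite_atTop_of_isClosedEmbedding
    (Topology.IsClosedEmbedding.piMap fun _ ↦ Nat.isClosedEmbedding_coe_real)

variable [NormedAddCommGroup E] [NormedSpace ℝ E] {w : ι → E}

lemma exists_pos_mul_norm_le_norm_sum_smul (hw : 0 ∉ convexHull ℝ (range w)) :
    ∃ c > 0, ∀ x : ι → ℝ, 0 ≤ x → c * ‖x‖ ≤ ‖∑ i, x i • w i‖ := by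
  obtain ⟨c, hc, ball_subset⟩ := Metric.mem_nhds_iff.mp
    (((finite_range w).isClosed_convexHull ℝ).isOpen_compl.mem_nhds hw)
  refine ⟨c, hc, fun x hx ↦ ?_⟩
  have sum_nonneg : 0 ≤ ∑ i, x i := Finset.sum_nonneg fun i _ ↦ hx i
  have norm_le_sum : ‖x‖ ≤ ∑ i, x i := (pi_norm_le_iff_of_nonneg sum_nonneg).mpr fun i ↦ by
    rw [Real.norm_of_nonneg (hx i)]
    exact Finset.single_le_sum (fun j _ ↦ hx j) (Finset.mem_univ i)
  rcases sum_nonneg.eq_or_lt with sum_eq_zero | sum_pos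
  · rw [← sum_eq_zero] at norm_le_sum
    exact (mul_nonpos_of_nonneg_of_nonpos hc.le norm_le_sum).trans (norm_nonneg _)
  have centerMass_mem : Finset.univ.centerMass x w ∈ convexHull ℝ (range w) :=
    Finset.univ.centerMass_mem_convexHull (fun i _ ↦ hx i) sum_pos fun i _ ↦ mem_range_self i
  have le_norm_centerMass : c ≤ ‖Finset.univ.centerMass x w‖ := by
    by_contra! norm_lt
    exact ball_subset (mem_ball_zero_iff.mpr norm_lt) centerMass_mem
  calc c * ‖x‖ ≤ ‖Finset.univ.centerMass x w‖ * ∑ i, x i := by gcongr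
    _ = ‖(∑ i, x i) • Finset.univ.centerMass x w‖ := by
      rw [norm_smul, Real.norm_of_nonneg sum_nonneg, mul_comm]
    _ = ‖∑ i, x i • w i‖ := by rw [Finset.centerMass, smul_inv_smul₀ sum_pos.ne']

lemma natCast_pi_isBigO_add_sum_smul (hw : 0 ∉ convexHull ℝ (range w)) (a : E) :
    (fun (m : ι → ℕ) i ↦ (m i : ℝ)) =O[cofinite] fun m ↦ a + ∑ i, (m i : ℝ) • w i := by
  obtain ⟨c, hc, le_norm_sum⟩ := exists_pos_mul_norm_le_norm_sum_smul hw
  have isBigO_sum : (fun (m : ι → ℕ) i ↦ (m i : ℝ)) =O[cofinite] fun m ↦ ∑ i, (m i : ℝ) • w i :=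
    .of_bound c⁻¹ <| .of_forall fun m ↦
      (le_inv_mul_iff₀ hc).mpr (le_norm_sum _ fun i ↦ Nat.cast_nonneg _)
  have isLittleO_const : (fun _ ↦ a) =o[cofinite] fun (m : ι → ℕ) i ↦ (m i : ℝ) :=
    isLittleO_const_left.mpr (.inr tendsto_norm_natCast_pi_cofinite_atTop)
  exact isBigO_sum.trans (isLittleO_const.trans_isBigO isBigO_sum).right_isBigO_add

lemma summable_norm_add_sum_smul_rpow (hw : 0 ∉ convexHull ℝ (range w)) (a : E) {r : ℝ}
    (hr : r < -Fintype.card ι) :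
    Summable fun m : ι → ℕ ↦ ‖a + ∑ i, (m i : ℝ) • w i‖ ^ r := by
  have r_nonpos : r ≤ 0 := hr.le.trans (neg_nonpos.mpr (Nat.cast_nonneg _))
  have natCast_ne_zero : ∀ᶠ m : ι → ℕ in cofinite, (fun i ↦ (m i : ℝ)) ≠ 0 :=
    (tendsto_norm_natCast_pi_cofinite_atTop.eventually_gt_atTop 0).mono fun _ ↦ norm_pos_iff.mp
  exact summable_of_isBigO (summable_norm_natCast_pi_rpow hr)
    (isBigO_norm_rpow_of_nonpos r_nonpos natCast_ne_zero (natCast_pi_isBigO_add_sum_smul hw a))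

end LatticePoints

lemma zero_notMem_convexHull_of_re_pos {S : Set ℂ} (hS : ∀ z ∈ S, 0 < z.re) :
    0 ∉ convexHull ℝ S := by
  have hull_subset : convexHull ℝ S ⊆ {z | 0 < z.re} := convexHull_min hS (convex_halfSpace_re_gt 0)
  exact fun zero_mem ↦ lt_irrefl (0 : ℝ) (hull_subset zero_mem)

-- In the plane, `hw` says that the `w i` lie in a common open half-plane. For general `a`, the
-- powers are principal values, and the finitely many terms with base `0` have the value `0`.
theorem stmt4_general {ι : Type*} [Fintype ι] {w : ι → ℂ} (hw : 0 ∉ convexHull ℝ (range w))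
    (a : ℂ) {s : ℂ} (hs : Fintype.card ι < s.re) :
    Summable fun m : ι → ℕ ↦ (a + ∑ i, m i * w i) ^ (-s) := by
  have summable_norm_rpow := summable_norm_add_sum_smul_rpow hw a (neg_lt_neg hs)
  simp only [real_smul, ofReal_natCast] at summable_norm_rpow
  exact summable_of_isBigO summable_norm_rpow (isBigO_cpow_rpow isBoundedUnder_const)

theorem stmt4 (w₁ w₂ a : ℝ) (hw₁ : 0 < w₁) (hw₂ : 0 < w₂) (ha : 0 < a)
    (s : ℂ) (hs : 2 < s.re) :
    Summable (fun p : ℕ × ℕ =>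
      ((a + p.1 * w₁ + p.2 * w₂ : ℝ) : ℂ) ^ (-s)) := by
  have hw : 0 ∉ convexHull ℝ (range ![(w₁ : ℂ), w₂]) :=
    zero_notMem_convexHull_of_re_pos (by simp [hw₁, hw₂])
  simpa [Function.comp_def, add_assoc] using
    (finTwoArrowEquiv ℕ).symm.summable_iff.mpr (stmt4_general hw a (by simpa using hs))
end

section
/- Let w₁, w₂, a > 0, let 0 < λ < min(2π/w₁, 2π/w₂), and let σ be real with 1 < σ < 2. Define G₂(a,w,t) = e^{(w₁+w₂−a)t}/((e^{w₁t}−1)(e^{w₂t}−1)) − 1/(w₁w₂t²) for t > 0. Then ∫₀^∞ G₂(a,w,t) t^{σ−1} dt = ∫_λ^∞ e^{(w₁+w₂−a)t}/((e^{w₁t}−1)(e^{w₂t}−1)) t^{σ−1} dt + ∫₀^λ ( e^{(w₁+w₂−a)t}/((e^{w₁t}−1)(e^{w₂t}−1)) − 1/(w₁w₂t²) − (w₁+w₂−2a)/(2w₁w₂t) ) t^{σ−1} dt + (1/(w₁w₂)) λ^{σ−2}/(σ−2) + ((w₁+w₂−2a)/(2w₁w₂)) λ^{σ−1}/(σ−1).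 -/
open MeasureTheory Real Set

/-!
Write `K` for the kernel `e ^ ((w₁ + w₂ - a) t) / ((e ^ (w₁ t) - 1) (e ^ (w₂ t) - 1))`. Then
`t ^ 2 * K t` is differentiable at `0`, and its value `A` and derivative `B` there are the
coefficients of the polar part `A / t ^ 2 + B / t` of `K`. Since the remainder is `o(1 / t)` at `0`,
it is integrable there against `t ^ (σ - 1)`, while `K` decays like `e ^ (-a t)` at infinity.
Cutting the integral of `K t - A / t ^ 2` at `λ`, the term `A / t ^ 2` is integrated over `(λ, ∞)`,
where it converges because `σ < 2`, and `B / t` over `(0, λ)`, where it converges because `σ > 1`.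
-/

open Asymptotics Filter Topology

section Mellin

variable {f : ℝ → ℝ} {b s lam : ℝ}

theorem continuousOn_rpow_mul (hf : ContinuousOn f (Ioi 0)) :
    ContinuousOn (fun t => t ^ s * f t) (Ioi 0) :=
  (continuousOn_id.rpow_const fun _ ht => .inl (ne_of_gt ht)).mul hf

theorem integrableOn_Ioc_rpow_mul_of_isBigO (hf : ContinuousOn f (Ioi 0))
    (hf_zero : f =O[𝓝[>] 0] (· ^ (-b))) (hs : b < s) :
    IntegrableOn (fun t => t ^ (s - 1) * f t) (Ioc 0 lam) := by
  obtain ⟨c, hc, hc_int⟩ := mellin_convergent_zero_of_isBigO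
    (hf.aestronglyMeasurable measurableSet_Ioi) hf_zero hs
  have h_Icc : IntegrableOn (fun t => t ^ (s - 1) * f t) (Icc c lam) :=
    ((continuousOn_rpow_mul hf).mono fun _ ht => hc.trans_le ht.1).integrableOn_Icc
  exact (hc_int.union h_Icc).mono_set fun t ht =>
    (le_total t c).imp (fun h => ⟨ht.1, h⟩) (fun h => ⟨h, ht.2⟩)

theorem integrableOn_Ioi_rpow_mul_of_isBigO_exp_neg (hf : ContinuousOn f (Ioi 0))
    (hb : 0 < b) (hf_top : f =O[atTop] fun t => exp (-b * t)) (hlam : 0 < lam) :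
    IntegrableOn (fun t => t ^ s * f t) (Ioi lam) := by
  refine integrable_of_isBigO_exp_neg (half_pos hb)
    ((continuousOn_rpow_mul hf).mono fun _ ht => hlam.trans_le ht) <|
    ((isLittleO_rpow_exp_pos_mul_atTop s (half_pos hb)).isBigO.mul hf_top).congr_right
      fun t => ?_
  rw [← exp_add]
  ring_nf

theorem integral_Ioc_zero_rpow_sub_one (hlam : 0 ≤ lam) (hs : 0 < s) :
    ∫ t in Ioc 0 lam, t ^ (s - 1) = lam ^ s / s := by
  rw [← intervalIntegral.integral_of_le hlam, integral_rpow (.inl (by linarith)), sub_add_cancel,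
    zero_rpow hs.ne', sub_zero]

theorem integral_Ioi_zero_rpow_smul_sub {E : Type*} [NormedAddCommGroup E] [NormedSpace ℝ E]
    [CompleteSpace E] {f : ℝ → E} {A B : E} {p q : ℝ} (hlam : 0 < lam) (hq : q < s) (hp : s < p)
    (hf_top : IntegrableOn (fun t => t ^ (s - 1) • f t) (Ioi lam))
    (hf_zero : IntegrableOn (fun t => t ^ (s - 1) • (f t - t ^ (-p) • A - t ^ (-q) • B))
      (Ioc 0 lam)) :
    ∫ t in Ioi 0, t ^ (s - 1) • (f t - t ^ (-p) • A) =
      (∫ t in Ioi lam, t ^ (s - 1) • f t) +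
        (∫ t in Ioc 0 lam, t ^ (s - 1) • (f t - t ^ (-p) • A - t ^ (-q) • B)) +
        (lam ^ (s - p) / (s - p)) • A + (lam ^ (s - q) / (s - q)) • B := by
  have h_mul_rpow (r : ℝ) {t : ℝ} (ht : 0 < t) : t ^ (s - r - 1) = t ^ (s - 1) * t ^ (-r) := by
    rw [← rpow_add ht]
    ring_nf
  have h_top : EqOn (fun t => t ^ (s - 1) • f t - t ^ (s - p - 1) • A)
      (fun t => t ^ (s - 1) • (f t - t ^ (-p) • A)) (Ioi lam) := fun t ht => by
    simp only [h_mul_rpow p (hlam.trans ht), smul_sub, mul_smul]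
  have h_zero : EqOn
      (fun t => t ^ (s - 1) • (f t - t ^ (-p) • A - t ^ (-q) • B) + t ^ (s - q - 1) • B)
      (fun t => t ^ (s - 1) • (f t - t ^ (-p) • A)) (Ioc 0 lam) := fun t ht => by
    simp only [h_mul_rpow q ht.1, smul_sub, mul_smul, sub_add_cancel]
  have hA : IntegrableOn (fun t => t ^ (s - p - 1) • A) (Ioi lam) :=
    (integrableOn_Ioi_rpow_of_lt (by linarith) hlam).smul_const A
  have hB : IntegrableOn (fun t => t ^ (s - q - 1) • B) (Ioc 0 lam) :=
    (intervalIntegral.intervalIntegrable_rpow' (by linarith)).1.smul_const B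
  rw [← Ioc_union_Ioi_eq_Ioi hlam.le, setIntegral_union Ioc_disjoint_Ioi_same measurableSet_Ioi
      ((hf_zero.add hB).congr_fun h_zero measurableSet_Ioc)
      ((hf_top.sub hA).congr_fun h_top measurableSet_Ioi),
    ← setIntegral_congr_fun measurableSet_Ioc h_zero,
    ← setIntegral_congr_fun measurableSet_Ioi h_top,
    integral_add hf_zero hB, integral_sub hf_top hA, integral_smul_const, integral_smul_const,
    integral_Ioc_zero_rpow_sub_one hlam.le (sub_pos.2 hq),
    integral_Ioi_rpow_of_lt (by linarith) hlam, sub_add_cancel, neg_div, neg_smul]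
  abel

end Mellin

theorem rpow_neg_two_smul_sub_isLittleO {E : Type*} [NormedAddCommGroup E] [NormedSpace ℝ E]
    {H : ℝ → E} {H' : E} (hH : HasDerivAt H H' 0) :
    (fun t => t ^ (-2 : ℝ) • H t - t ^ (-2 : ℝ) • H 0 - t ^ (-1 : ℝ) • H') =o[𝓝[>] 0]
      fun t => t ^ (-1 : ℝ) := by
  have h_taylor := (hasDerivAt_iff_isLittleO_nhds_zero.1 hH).mono
    (nhdsWithin_le_nhds (s := Ioi (0 : ℝ)))
  have h_mul {t : ℝ} (ht : t ∈ Ioi 0) : t ^ (-2 : ℝ) * t = t ^ (-1 : ℝ) := by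
    rw [← rpow_add_one (ne_of_gt ht)]
    norm_num
  refine ((isBigO_refl (fun t : ℝ => t ^ (-2 : ℝ)) _).smul_isLittleO h_taylor).congr' ?_ ?_ <;>
    filter_upwards [self_mem_nhdsWithin] with t ht
  · simp only [zero_add, smul_sub, smul_smul, h_mul ht]
  · rw [smul_eq_mul, h_mul ht]

theorem hasDerivAt_dslope_of_hasFPowerSeriesAt {𝕜 E : Type*} [NontriviallyNormedField 𝕜]
    [NormedAddCommGroup E] [NormedSpace 𝕜 E] {f : 𝕜 → E} {p : FormalMultilinearSeries 𝕜 𝕜 E}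
    {x : 𝕜} (hf : HasFPowerSeriesAt f p x) : HasDerivAt (dslope f x) (p.coeff 2) x := by
  simpa [FormalMultilinearSeries.coeff_fslope] using hf.has_fpower_series_dslope_fslope.hasDerivAt

theorem hasDerivAt_dslope_exp_zero : HasDerivAt (dslope exp 0) (1 / 2) 0 := by
  have h := hasDerivAt_dslope_of_hasFPowerSeriesAt
    (NormedSpace.exp_hasFPowerSeriesAt_zero (𝕂 := ℝ) (𝔸 := ℝ))
  rw [← exp_eq_exp_ℝ] at h
  simpa [NormedSpace.expSeries_eq_ofScalars, FormalMultilinearSeries.coeff_ofScalars] using h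

theorem rpow_neg_two (x : ℝ) : x ^ (-2 : ℝ) = (x ^ 2)⁻¹ := by
  exact_mod_cast rpow_intCast x (-2)

section DoubleBernoulli

/-- The kernel `∑ e ^ (-(a + m w₁ + n w₂) t)` (sum over `m, n ≥ 0`) of the double zeta function:
its Mellin transform is `Γ(s) ζ₂(s, (w₁, w₂), a)`. -/
noncomputable def barnesKernel (a w₁ w₂ t : ℝ) : ℝ :=
  exp ((w₁ + w₂ - a) * t) / ((exp (w₁ * t) - 1) * (exp (w₂ * t) - 1))

/-- The generating function `∑ B_n^{(2)}(a, w) t ^ n / n!` of the double Bernoulli coefficients,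
that is `t ^ 2` times `barnesKernel`. The factors `(e ^ (wᵢ t) - 1) / t` are written with `dslope`
so that the value at `t = 0` is the limit and not `0 / 0 = 0`. -/
noncomputable def doubleBernoulliGen (a w₁ w₂ t : ℝ) : ℝ :=
  exp ((w₁ + w₂ - a) * t) / (w₁ * dslope exp 0 (w₁ * t) * (w₂ * dslope exp 0 (w₂ * t)))

variable {a w₁ w₂ : ℝ}

theorem doubleBernoulliGen_zero : doubleBernoulliGen a w₁ w₂ 0 = 1 / (w₁ * w₂) := by
  simp [doubleBernoulliGen]

theorem hasDerivAt_doubleBernoulliGen_zero (hw₁ : w₁ ≠ 0) (hw₂ : w₂ ≠ 0) :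
    HasDerivAt (doubleBernoulliGen a w₁ w₂) ((w₁ + w₂ - 2 * a) / (2 * w₁ * w₂)) 0 := by
  have h_factor (w : ℝ) :
      HasDerivAt (fun t => w * dslope exp 0 (w * t)) (w * (1 / 2 * w)) 0 := by
    refine HasDerivAt.const_mul w (HasDerivAt.comp 0 (h₂ := dslope exp 0) ?_ ?_)
    · simpa using hasDerivAt_dslope_exp_zero
    · simpa using (hasDerivAt_id (0 : ℝ)).const_mul w
  have h_exp : HasDerivAt (fun t => exp ((w₁ + w₂ - a) * t)) (w₁ + w₂ - a) 0 := by
    simpa using ((hasDerivAt_id (0 : ℝ)).const_mul (w₁ + w₂ - a)).exp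
  refine (h_exp.div ((h_factor w₁).mul (h_factor w₂)) (by simp [hw₁, hw₂])).congr_deriv ?_
  simp only [Pi.mul_apply, mul_zero, exp_zero, dslope_same, Real.deriv_exp, mul_one]
  field_simp
  ring

theorem barnesKernel_eq_rpow_mul_doubleBernoulliGen {t : ℝ} (ht : t ≠ 0) :
    barnesKernel a w₁ w₂ t = t ^ (-2 : ℝ) * doubleBernoulliGen a w₁ w₂ t := by
  have h_factor (w : ℝ) : exp (w * t) - 1 = t * (w * dslope exp 0 (w * t)) := by
    have h := sub_smul_dslope exp 0 (w * t)
    rw [sub_zero, smul_eq_mul, exp_zero] at h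
    rw [← h]
    ring
  rw [barnesKernel, doubleBernoulliGen, h_factor, h_factor, rpow_neg_two]
  field_simp

theorem barnesKernel_sub_isLittleO (hw₁ : w₁ ≠ 0) (hw₂ : w₂ ≠ 0) :
    (fun t => barnesKernel a w₁ w₂ t - t ^ (-2 : ℝ) * (1 / (w₁ * w₂)) -
      t ^ (-1 : ℝ) * ((w₁ + w₂ - 2 * a) / (2 * w₁ * w₂))) =o[𝓝[>] 0] fun t => t ^ (-1 : ℝ) := by
  refine (rpow_neg_two_smul_sub_isLittleO
    (hasDerivAt_doubleBernoulliGen_zero (a := a) hw₁ hw₂)).congr' ?_ .rfl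
  filter_upwards [self_mem_nhdsWithin] with t ht
  rw [barnesKernel_eq_rpow_mul_doubleBernoulliGen (ne_of_gt ht), doubleBernoulliGen_zero]
  rfl

theorem continuousOn_barnesKernel (hw₁ : w₁ ≠ 0) (hw₂ : w₂ ≠ 0) :
    ContinuousOn (barnesKernel a w₁ w₂) (Ioi 0) := by
  have h_ne {w t : ℝ} (hw : w ≠ 0) (ht : t ∈ Ioi 0) : exp (w * t) - 1 ≠ 0 :=
    sub_ne_zero.2 (exp_eq_one_iff _ |>.not.2 (mul_ne_zero hw (ne_of_gt ht)))
  exact ContinuousOn.div (by fun_prop) (by fun_prop) fun t ht =>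
    mul_ne_zero (h_ne hw₁ ht) (h_ne hw₂ ht)

theorem barnesKernel_isBigO_exp_neg (hw₁ : 0 < w₁) (hw₂ : 0 < w₂) :
    barnesKernel a w₁ w₂ =O[atTop] fun t => exp (-a * t) := by
  have h_factor {w : ℝ} (hw : 0 < w) :
      Tendsto (fun t => 1 - exp (-(w * t))) atTop (𝓝 1) := by
    simpa using (tendsto_exp_neg_atTop_nhds_zero.comp
      (tendsto_id.const_mul_atTop hw)).const_sub 1
  have h_lim := (((h_factor hw₁).mul (h_factor hw₂)).inv₀ (by norm_num)).isBigO_one ℝ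
  refine ((isBigO_refl (fun t => exp (-a * t)) atTop).mul h_lim).congr (fun t => ?_)
    fun t => mul_one _
  have h_exp (w : ℝ) : exp (w * t) - 1 = exp (w * t) * (1 - exp (-(w * t))) := by
    rw [mul_sub, ← exp_add, add_neg_cancel, exp_zero, mul_one]
  rw [barnesKernel, h_exp, h_exp, mul_mul_mul_comm, ← exp_add, div_mul_eq_div_div, ← exp_sub]
  ring_nf

theorem integrableOn_Ioi_rpow_mul_barnesKernel {lam s : ℝ} (hw₁ : 0 < w₁) (hw₂ : 0 < w₂)
    (ha : 0 < a) (hlam : 0 < lam) :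
    IntegrableOn (fun t => t ^ s * barnesKernel a w₁ w₂ t) (Ioi lam) :=
  integrableOn_Ioi_rpow_mul_of_isBigO_exp_neg (continuousOn_barnesKernel hw₁.ne' hw₂.ne') ha
    (barnesKernel_isBigO_exp_neg hw₁ hw₂) hlam

theorem integrableOn_Ioc_rpow_mul_barnesKernel_sub {lam s : ℝ} (hw₁ : w₁ ≠ 0) (hw₂ : w₂ ≠ 0)
    (hs : 1 < s) :
    IntegrableOn (fun t => t ^ (s - 1) * (barnesKernel a w₁ w₂ t - t ^ (-2 : ℝ) * (1 / (w₁ * w₂)) -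
      t ^ (-1 : ℝ) * ((w₁ + w₂ - 2 * a) / (2 * w₁ * w₂)))) (Ioc 0 lam) := by
  have h_rpow (r : ℝ) : ContinuousOn (fun t : ℝ => t ^ r) (Ioi 0) :=
    continuousOn_id.rpow_const fun _ ht => .inl (ne_of_gt ht)
  exact integrableOn_Ioc_rpow_mul_of_isBigO
    (((continuousOn_barnesKernel hw₁ hw₂).sub ((h_rpow _).mul_const _)).sub
      ((h_rpow _).mul_const _))
    (barnesKernel_sub_isLittleO hw₁ hw₂).isBigO hs

end DoubleBernoulli

theorem stmt6_general (w₁ w₂ a lam : ℝ) (hw₁ : 0 < w₁) (hw₂ : 0 < w₂) (ha : 0 < a)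
    (hlam : 0 < lam) (σ : ℝ) (hσ : 1 < σ) (hσ' : σ < 2) :
    ∫ t in Ioi 0, G₂ a w₁ w₂ t * t ^ (σ - 1) =
      (∫ t in Ioi lam, barnesKernel a w₁ w₂ t * t ^ (σ - 1)) +
        (∫ t in Ioo 0 lam, (barnesKernel a w₁ w₂ t - 1 / (w₁ * w₂ * t ^ 2) -
          (w₁ + w₂ - 2 * a) / (2 * w₁ * w₂ * t)) * t ^ (σ - 1)) +
        1 / (w₁ * w₂) * (lam ^ (σ - 2) / (σ - 2)) +
        (w₁ + w₂ - 2 * a) / (2 * w₁ * w₂) * (lam ^ (σ - 1) / (σ - 1)) := by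
  have h_double_pole (t : ℝ) : 1 / (w₁ * w₂ * t ^ 2) = t ^ (-2 : ℝ) * (1 / (w₁ * w₂)) := by
    rw [rpow_neg_two, ← one_div_mul_one_div, one_div (t ^ 2), mul_comm]
  have h_simple_pole (t : ℝ) : (w₁ + w₂ - 2 * a) / (2 * w₁ * w₂ * t) =
      t ^ (-1 : ℝ) * ((w₁ + w₂ - 2 * a) / (2 * w₁ * w₂)) := by
    rw [rpow_neg_one, div_mul_eq_div_div, div_eq_inv_mul]
  simp only [G₂, h_double_pole, h_simple_pole, ← integral_Ioc_eq_integral_Ioo,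
    mul_comm _ (_ ^ (σ - 1)), mul_comm _ (lam ^ (_ : ℝ) / _)]
  exact integral_Ioi_zero_rpow_smul_sub hlam hσ hσ'
    (integrableOn_Ioi_rpow_mul_barnesKernel hw₁ hw₂ ha hlam)
    (integrableOn_Ioc_rpow_mul_barnesKernel_sub hw₁.ne' hw₂.ne' hσ)

theorem stmt6 (w₁ w₂ a lam : ℝ) (hw₁ : 0 < w₁) (hw₂ : 0 < w₂) (ha : 0 < a)
    (hlam : 0 < lam) (hlam' : lam < min (2 * Real.pi / w₁) (2 * Real.pi / w₂))
    (σ : ℝ) (hσ : 1 < σ) (hσ' : σ < 2) :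
    ∫ t in Set.Ioi (0 : ℝ), G₂ a w₁ w₂ t * t ^ (σ - 1) =
      (∫ t in Set.Ioi lam,
          Real.exp ((w₁ + w₂ - a) * t) /
              ((Real.exp (w₁ * t) - 1) * (Real.exp (w₂ * t) - 1)) * t ^ (σ - 1)) +
        (∫ t in Set.Ioo (0 : ℝ) lam,
          (Real.exp ((w₁ + w₂ - a) * t) /
                ((Real.exp (w₁ * t) - 1) * (Real.exp (w₂ * t) - 1)) -
              1 / (w₁ * w₂ * t ^ 2) -
              (w₁ + w₂ - 2 * a) / (2 * w₁ * w₂ * t)) * t ^ (σ - 1)) +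
        1 / (w₁ * w₂) * (lam ^ (σ - 2) / (σ - 2)) +
        (w₁ + w₂ - 2 * a) / (2 * w₁ * w₂) * (lam ^ (σ - 1) / (σ - 1)) :=
  stmt6_general w₁ w₂ a lam hw₁ hw₂ ha hlam σ hσ hσ'
end

section
/- Let w₁, w₂ > 0 and let n ≥ 1 be an integer. Define f_{w,n}(a) = (w₁+w₂)²aⁿ − w₁²(a−w₂)ⁿ − w₂²(a−w₁)ⁿ. Then f_{w,n}(a) > 0 for every real a ≥ (w₁+w₂)/2. -/
/-! Passing from `a` to `a - w` with `0 ≤ w ≤ 2a` does not increase the absolute value, so both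
subtracted powers are at most `aⁿ`; what remains is at least `aⁿ` times the cross term of the
square `(w₁ + w₂)²`. -/

theorem abs_sub_le_left_iff {G : Type*} [AddCommGroup G] [LinearOrder G] [IsOrderedAddMonoid G]
    {a w : G} : |a - w| ≤ a ↔ 0 ≤ w ∧ w ≤ a + a := by
  rw [abs_le, neg_le_sub_iff_le_add, sub_le_self_iff, and_comm]

theorem pow_le_pow_of_abs_le {R : Type*} [Ring R] [LinearOrder R] [IsOrderedRing R]
    {a b : R} (hab : |a| ≤ b) (n : ℕ) : a ^ n ≤ b ^ n :=
  calc
    a ^ n ≤ |a ^ n| := le_abs_self _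
    _ = |a| ^ n := abs_pow a n
    _ ≤ b ^ n := pow_le_pow_left₀ (abs_nonneg a) hab n

theorem stmt9_general {R : Type*} [Ring R] [LinearOrder R] [IsStrictOrderedRing R]
    {w₁ w₂ a : R} (hw₁ : 0 < w₁) (hw₂ : 0 < w₂) (hw₁a : w₁ ≤ 2 * a) (hw₂a : w₂ ≤ 2 * a) (n : ℕ) :
    0 < (w₁ + w₂) ^ 2 * a ^ n - w₁ ^ 2 * (a - w₂) ^ n - w₂ ^ 2 * (a - w₁) ^ n := by
  have ha : 0 < a := (mul_pos_iff_of_pos_left two_pos).1 (hw₁.trans_le hw₁a)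
  rw [two_mul] at hw₁a hw₂a
  have hpow₁ : (a - w₁) ^ n ≤ a ^ n := pow_le_pow_of_abs_le (abs_sub_le_left_iff.2 ⟨hw₁.le, hw₁a⟩) n
  have hpow₂ : (a - w₂) ^ n ≤ a ^ n := pow_le_pow_of_abs_le (abs_sub_le_left_iff.2 ⟨hw₂.le, hw₂a⟩) n
  calc
    0 < (w₁ * w₂ + w₂ * w₁) * a ^ n := by positivity
    _ = (w₁ + w₂) ^ 2 * a ^ n - w₁ ^ 2 * a ^ n - w₂ ^ 2 * a ^ n := by noncomm_ring
    _ ≤ (w₁ + w₂) ^ 2 * a ^ n - w₁ ^ 2 * (a - w₂) ^ n - w₂ ^ 2 * (a - w₁) ^ n := by gcongr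

theorem stmt9 (w₁ w₂ : ℝ) (hw₁ : 0 < w₁) (hw₂ : 0 < w₂) (n : ℕ) (hn : 1 ≤ n)
    (a : ℝ) (ha : (w₁ + w₂) / 2 ≤ a) :
    0 < (w₁ + w₂) ^ 2 * a ^ n - w₁ ^ 2 * (a - w₂) ^ n - w₂ ^ 2 * (a - w₁) ^ n :=
  stmt9_general hw₁ hw₂ (by linarith) (by linarith) n
end

section
/- Let w₁, w₂ > 0 and let n ≥ 1 be an integer. Define f_{w,n}(a) = (w₁+w₂)²aⁿ − w₁²(a−w₂)ⁿ − w₂²(a−w₁)ⁿ. Then f_{w,n} is strictly monotone increasing on the interval [(w₁+w₂)/2, ∞), i.e., for all a, b with (w₁+w₂)/2 ≤ a < b one has f_{w,n}(a) < f_{w,n}(b). -/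
/-!
Expanding `(w₁ + w₂) ^ 2` writes the function as
`w₁ ^ 2 * (a ^ n - (a - w₂) ^ n) + w₂ ^ 2 * (a ^ n - (a - w₁) ^ n) + 2 * w₁ * w₂ * a ^ n`.
The last term is strictly increasing for `0 ≤ a`. For `0 ≤ w`, each difference
`a ^ n - (a - w) ^ n` is increasing as soon as `|a - w| ≤ a`, that is `w ≤ 2 * a`: the translate
`a ↦ a - w` preserves the factor `b - a` of `b ^ n - a ^ n`, and does not increase the cofactor
`∑ i ∈ Finset.range n, b ^ i * a ^ (n - 1 - i)`.
-/

section OrderedRing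

open Finset

variable {R : Type*} [CommRing R] [LinearOrder R] [IsStrictOrderedRing R]

theorem geom_sum₂_le_geom_sum₂_of_abs_le {x y x' y' : R} (hx : |x| ≤ x') (hy : |y| ≤ y')
    (n : ℕ) :
    ∑ i ∈ range n, x ^ i * y ^ (n - 1 - i) ≤ ∑ i ∈ range n, x' ^ i * y' ^ (n - 1 - i) := by
  refine sum_le_sum fun i _ => ?_
  calc x ^ i * y ^ (n - 1 - i)
      ≤ |x ^ i * y ^ (n - 1 - i)| := le_abs_self _
    _ = |x| ^ i * |y| ^ (n - 1 - i) := by rw [abs_mul, abs_pow, abs_pow]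
    _ ≤ x' ^ i * y' ^ (n - 1 - i) := by
      have hx' : 0 ≤ x' := (abs_nonneg x).trans hx
      gcongr

theorem monotoneOn_pow_sub_sub_pow {w : R} (hw : 0 ≤ w) (n : ℕ) :
    MonotoneOn (fun a : R => a ^ n - (a - w) ^ n) {a | w ≤ 2 * a} := by
  have abs_sub_le : ∀ c ∈ {a | w ≤ 2 * a}, |c - w| ≤ c := fun c (hc : w ≤ 2 * c) =>
    abs_le.2 ⟨by linarith, by linarith⟩
  intro a ha b hb hab
  have increment_le : (b - w) ^ n - (a - w) ^ n ≤ b ^ n - a ^ n :=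
    calc (b - w) ^ n - (a - w) ^ n
        = (∑ i ∈ range n, (b - w) ^ i * (a - w) ^ (n - 1 - i)) * (b - a) := by
          rw [← geom_sum₂_mul, sub_sub_sub_cancel_right]
      _ ≤ (∑ i ∈ range n, b ^ i * a ^ (n - 1 - i)) * (b - a) :=
          mul_le_mul_of_nonneg_right
            (geom_sum₂_le_geom_sum₂_of_abs_le (abs_sub_le b hb) (abs_sub_le a ha) n)
            (sub_nonneg.2 hab)
      _ = b ^ n - a ^ n := geom_sum₂_mul b a n
  change a ^ n - (a - w) ^ n ≤ b ^ n - (b - w) ^ n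
  linarith

theorem stmt10_general {w₁ w₂ : R} (hw₁ : 0 < w₁) (hw₂ : 0 < w₂) {n : ℕ} (hn : 1 ≤ n) :
    StrictMonoOn
      (fun a : R => (w₁ + w₂) ^ 2 * a ^ n - w₁ ^ 2 * (a - w₂) ^ n - w₂ ^ 2 * (a - w₁) ^ n)
      {a | max w₁ w₂ ≤ 2 * a} := by
  intro a ha b hb hab
  obtain ⟨ha₁, ha₂⟩ : w₁ ≤ 2 * a ∧ w₂ ≤ 2 * a := max_le_iff.1 ha
  obtain ⟨hb₁, hb₂⟩ : w₁ ≤ 2 * b ∧ w₂ ≤ 2 * b := max_le_iff.1 hb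
  have h₁ : w₂ ^ 2 * (a ^ n - (a - w₁) ^ n) ≤ w₂ ^ 2 * (b ^ n - (b - w₁) ^ n) :=
    mul_le_mul_of_nonneg_left (monotoneOn_pow_sub_sub_pow hw₁.le n ha₁ hb₁ hab.le) (sq_nonneg w₂)
  have h₂ : w₁ ^ 2 * (a ^ n - (a - w₂) ^ n) ≤ w₁ ^ 2 * (b ^ n - (b - w₂) ^ n) :=
    mul_le_mul_of_nonneg_left (monotoneOn_pow_sub_sub_pow hw₂.le n ha₂ hb₂ hab.le) (sq_nonneg w₁)
  have cross : w₁ * w₂ * a ^ n < w₁ * w₂ * b ^ n :=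
    mul_lt_mul_of_pos_left
      (pow_lt_pow_left₀ hab (by linarith) (Nat.one_le_iff_ne_zero.1 hn)) (mul_pos hw₁ hw₂)
  linarith

end OrderedRing

theorem stmt10 (w₁ w₂ : ℝ) (hw₁ : 0 < w₁) (hw₂ : 0 < w₂) (n : ℕ) (hn : 1 ≤ n) :
    StrictMonoOn
      (fun a : ℝ =>
        (w₁ + w₂) ^ 2 * a ^ n - w₁ ^ 2 * (a - w₂) ^ n - w₂ ^ 2 * (a - w₁) ^ n)
      (Set.Ici ((w₁ + w₂) / 2)) :=
  (stmt10_general hw₁ hw₂ hn).mono fun a (ha : (w₁ + w₂) / 2 ≤ a) =>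
    max_le (a := w₁) (b := w₂) (by linarith) (by linarith)
end

section
/- For every real c > 0 and every integer n ≥ 1, one has (1+c)^{n+2} − (1−c)ⁿ − c²(c−1)ⁿ > 0. -/
theorem pow_add_pow_lt {R : Type*} [Semiring R] [PartialOrder R] [IsStrictOrderedRing R]
    {x y : R} (hx : 0 < x) (hy : 0 < y) {k : ℕ} (hk : 1 < k) :
    x ^ k + y ^ k < (x + y) ^ k := by
  obtain ⟨m, rfl⟩ := Nat.exists_eq_add_of_le' hk.le
  have hm : m ≠ 0 := by lia
  calc x ^ (m + 1) + y ^ (m + 1)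
      = x ^ m * x + y ^ m * y := by rw [pow_succ, pow_succ]
    _ < x ^ m * (x + y) + y ^ m * (x + y) := by
      gcongr
      · exact lt_add_of_pos_right x hy
      · exact lt_add_of_pos_left y hx
    _ = (x ^ m + y ^ m) * (x + y) := (add_mul ..).symm
    _ ≤ (x + y) ^ m * (x + y) := by
      gcongr
      exact pow_add_pow_le hx.le hy.le hm
    _ = (x + y) ^ (m + 1) := (pow_succ ..).symm

section LinearOrderedRing

variable {R : Type*} [Ring R] [LinearOrder R]

theorem pow_le_pow_of_abs_le_s11 [IsOrderedRing R] {u s : R} (h : |u| ≤ s) (n : ℕ) :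
    u ^ n ≤ s ^ n :=
  calc u ^ n ≤ |u ^ n| := le_abs_self _
    _ = |u| ^ n := abs_pow u n
    _ ≤ s ^ n := pow_le_pow_left₀ (abs_nonneg u) h n

theorem mul_sub_pow_add_mul_sub_pow_le [IsOrderedRing R] {a b x y : R} (ha : 0 ≤ a) (hb : 0 ≤ b)
    (hx : 0 ≤ x) (hy : 0 ≤ y) (n : ℕ) :
    a * (x - y) ^ n + b * (y - x) ^ n ≤ (a + b) * (x + y) ^ n := by
  have hxy : |x - y| ≤ x + y := by
    simpa only [abs_of_nonneg hx, abs_of_nonneg hy] using abs_sub x y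
  have hyx : |y - x| ≤ x + y := abs_sub_comm x y ▸ hxy
  rw [add_mul]
  gcongr a * ?_ + b * ?_
  · exact pow_le_pow_of_abs_le_s11 hxy n
  · exact pow_le_pow_of_abs_le_s11 hyx n

theorem stmt11_general [IsStrictOrderedRing R] {x y : R} (hx : 0 < x) (hy : 0 < y) {k : ℕ}
    (hk : 1 < k) (n : ℕ) :
    x ^ k * (x - y) ^ n + y ^ k * (y - x) ^ n < (x + y) ^ (k + n) :=
  calc x ^ k * (x - y) ^ n + y ^ k * (y - x) ^ n
      ≤ (x ^ k + y ^ k) * (x + y) ^ n :=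
        mul_sub_pow_add_mul_sub_pow_le (pow_nonneg hx.le k) (pow_nonneg hy.le k) hx.le hy.le n
    _ < (x + y) ^ k * (x + y) ^ n :=
        mul_lt_mul_of_pos_right (pow_add_pow_lt hx hy hk) (pow_pos (add_pos hx hy) n)
    _ = (x + y) ^ (k + n) := (pow_add ..).symm

end LinearOrderedRing

theorem stmt11 (c : ℝ) (hc : 0 < c) (n : ℕ) (hn : 1 ≤ n) :
    0 < (1 + c) ^ (n + 2) - (1 - c) ^ n - c ^ 2 * (c - 1) ^ n := by
  rw [sub_sub, sub_pos, add_comm n 2]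
  simpa only [one_pow, one_mul] using stmt11_general one_pos hc one_lt_two n
end

section
/- Let w₁, w₂ > 0 and a ≥ (w₁+w₂)/2. Then for every t > 0, G₂(a,w,t) = e^{(w₁+w₂−a)t}/((e^{w₁t}−1)(e^{w₂t}−1)) − 1/(w₁w₂t²) < 0. -/
/-!
Pulling `e^{x/2}` out of each factor `e^x - 1 = 2 e^{x/2} sinh (x/2)` turns the first term of the
kernel into `e^{((w₁ + w₂)/2 - a) t} / (4 sinh (w₁t/2) sinh (w₂t/2))`. The hypothesis on `a` says
exactly that this exponential is at most `1`, and `|sinh u| > |u|` for `u ≠ 0` does the rest.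
-/

open Real

theorem exp_sub_one_eq_two_mul_exp_half_mul_sinh_half (x : ℝ) :
    exp x - 1 = 2 * exp (x / 2) * sinh (x / 2) := by
  calc exp x - 1 = exp (x / 2 + x / 2) - exp (x / 2 + -(x / 2)) := by
        rw [add_halves, add_neg_cancel, exp_zero]
    _ = 2 * exp (x / 2) * sinh (x / 2) := by
        rw [exp_add, exp_add, sinh_eq]
        ring

theorem mul_lt_sinh_mul_sinh {x y : ℝ} (hxy : 0 < x * y) : x * y < sinh x * sinh y := by
  have mul_lt_of_pos {u v : ℝ} (hu : 0 < u) (hv : 0 < v) : u * v < sinh u * sinh v :=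
    mul_lt_mul'' (self_lt_sinh_iff.2 hu) (self_lt_sinh_iff.2 hv) hu.le hv.le
  rcases pos_and_pos_or_neg_and_neg_of_mul_pos hxy with ⟨hx, hy⟩ | ⟨hx, hy⟩
  · exact mul_lt_of_pos hx hy
  · simpa only [sinh_neg, neg_mul_neg] using mul_lt_of_pos (neg_pos.2 hx) (neg_pos.2 hy)

theorem G₂_eq_exp_div_sinh_mul_sinh_sub (a w₁ w₂ t : ℝ) :
    G₂ a w₁ w₂ t =
      exp (((w₁ + w₂) / 2 - a) * t) / (4 * (sinh (w₁ * t / 2) * sinh (w₂ * t / 2)))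
        - 1 / (w₁ * w₂ * t ^ 2) := by
  have numerator : exp ((w₁ + w₂ - a) * t) =
      exp (w₁ * t / 2 + w₂ * t / 2) * exp (((w₁ + w₂) / 2 - a) * t) := by
    rw [← exp_add]
    ring_nf
  have denominator : (exp (w₁ * t) - 1) * (exp (w₂ * t) - 1) =
      exp (w₁ * t / 2 + w₂ * t / 2) * (4 * (sinh (w₁ * t / 2) * sinh (w₂ * t / 2))) := by
    rw [exp_sub_one_eq_two_mul_exp_half_mul_sinh_half,
      exp_sub_one_eq_two_mul_exp_half_mul_sinh_half, exp_add]
    ring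
  rw [G₂, numerator, denominator, mul_div_mul_left _ _ (exp_ne_zero _)]

theorem stmt12_general {w₁ w₂ a t : ℝ} (hw : 0 < w₁ * w₂) (ht : t ≠ 0)
    (ha : (w₁ + w₂) / 2 * t ≤ a * t) : G₂ a w₁ w₂ t < 0 := by
  have args_pos : 0 < w₁ * t / 2 * (w₂ * t / 2) := by
    calc 0 < w₁ * w₂ * (t / 2) ^ 2 := by positivity
      _ = w₁ * t / 2 * (w₂ * t / 2) := by ring
  have args_lt := mul_lt_sinh_mul_sinh args_pos
  have exp_le : exp (((w₁ + w₂) / 2 - a) * t) ≤ 1 := by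
    rw [exp_le_one_iff, sub_mul]
    exact sub_nonpos.2 ha
  rw [G₂_eq_exp_div_sinh_mul_sinh_sub, sub_neg]
  calc exp (((w₁ + w₂) / 2 - a) * t) / (4 * (sinh (w₁ * t / 2) * sinh (w₂ * t / 2)))
      ≤ 1 / (4 * (sinh (w₁ * t / 2) * sinh (w₂ * t / 2))) :=
        div_le_div_of_nonneg_right exp_le (mul_pos four_pos (args_pos.trans args_lt)).le
    _ < 1 / (4 * (w₁ * t / 2 * (w₂ * t / 2))) := by gcongr
    _ = 1 / (w₁ * w₂ * t ^ 2) := by ring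

theorem stmt12 (w₁ w₂ a : ℝ) (hw₁ : 0 < w₁) (hw₂ : 0 < w₂)
    (ha : (w₁ + w₂) / 2 ≤ a) (t : ℝ) (ht : 0 < t) :
    G₂ a w₁ w₂ t < 0 :=
  stmt12_general (mul_pos hw₁ hw₂) ht.ne' (mul_le_mul_of_nonneg_right ha ht.le)
end

section
/- Let w₁, w₂ > 0 and a ≥ (w₁+w₂)/2. Then for every t > 0, (w₁+w₂)² e^{at} − w₁² e^{(a−w₂)t} − w₂² e^{(a−w₁)t} > 2w₁w₂ + 4w₁w₂(w₁+w₂−a)t + w₁w₂(w₁+w₂−a)² t². -/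
/-!
Rescaling by `t` reduces the claim to `x = w₁ t`, `y = w₂ t`, `b = a t`. Put `m = (x + y) / 2` and
`d = (x - y) / 2`. At the least exponent `b = m` the right-hand side is
`4 m² eᵐ - (m + d)² eᵈ - (m - d)² e⁻ᵈ`, which is even in `d` and equals
`4 m² (eᵐ - eᵈ) + (m - d) (2 (m + d) cosh d + 4 m sinh d)`. For `0 ≤ d ≤ m` the bounds
`eᵐ - eᵈ ≥ (m + m² / 2) - (d + d² / 2)`, `cosh d ≥ 1` and `sinh d ≥ d` show that it is at least
`2 (m² - d²) (1 + m)² = 2 x y (1 + m)²`. A larger exponent `b` multiplies the right-hand side by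
`exp (b - m)`, which outgrows the quadratic in `u = 2 m - b` on the left, because
`2 + 4 u + u² < 2 (1 + m)² exp (m - u)` for `u ≤ m`, `0 < m`.
-/

open Real

lemma monotone_exp_sub_add_sq_half : Monotone fun x : ℝ ↦ exp x - (x + x ^ 2 / 2) := by
  have hderiv (x : ℝ) : HasDerivAt (fun x ↦ exp x - (x + x ^ 2 / 2)) (exp x - (1 + x)) x := by
    refine ((hasDerivAt_exp x).sub
      ((hasDerivAt_id x).add ((hasDerivAt_pow 2 x).div_const 2))).congr_deriv ?_
    norm_num
  refine monotone_of_hasDerivAt_nonneg hderiv fun x ↦ sub_nonneg.2 ?_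
  linarith [add_one_le_exp x]

lemma two_mul_sq_sub_sq_mul_one_add_sq_le {m d : ℝ} (hdm : |d| ≤ m) :
    2 * (m ^ 2 - d ^ 2) * (1 + m) ^ 2 ≤
      4 * m ^ 2 * exp m - (m + d) ^ 2 * exp d - (m - d) ^ 2 * exp (-d) := by
  wlog hd : 0 ≤ d generalizing d
  · have hneg := this (d := -d) (by rwa [abs_neg]) (by linarith)
    rw [neg_neg] at hneg
    linarith
  rw [abs_of_nonneg hd] at hdm
  have hm : 0 ≤ m := hd.trans hdm
  have : 0 ≤ m - d := sub_nonneg.2 hdm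
  have hexp : m + m ^ 2 / 2 - (d + d ^ 2 / 2) ≤ exp m - exp d := by
    linarith [monotone_exp_sub_add_sq_half hdm]
  have hcosh : 1 ≤ cosh d := one_le_cosh d
  have hsinh : d ≤ sinh d := self_le_sinh_iff.2 hd
  calc 2 * (m ^ 2 - d ^ 2) * (1 + m) ^ 2
      = 4 * m ^ 2 * (m + m ^ 2 / 2 - (d + d ^ 2 / 2)) +
          (m - d) * (2 * (m + d) * 1 + 4 * m * d) := by ring
    _ ≤ 4 * m ^ 2 * (exp m - exp d) +
          (m - d) * (2 * (m + d) * cosh d + 4 * m * sinh d) := by gcongr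
    _ = 4 * m ^ 2 * exp m - (m + d) ^ 2 * exp d - (m - d) ^ 2 * exp (-d) := by
      rw [cosh_eq, sinh_eq]
      ring

lemma two_add_four_mul_add_sq_lt_mul_exp_sub {m u : ℝ} (hm : 0 < m) (hu : u ≤ m) :
    2 + 4 * u + u ^ 2 < 2 * (1 + m) ^ 2 * exp (m - u) := by
  have hs : 0 ≤ m - u := sub_nonneg.2 hu
  calc 2 + 4 * u + u ^ 2
      = 2 + 4 * m + m ^ 2 - 4 * (m - u) - 2 * m * (m - u) + (m - u) ^ 2 := by ring
    _ < 2 * (1 + m) ^ 2 + 2 * (m - u) + (m - u) ^ 2 := by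
      linarith [mul_nonneg hm.le hs, pow_pos hm 2]
    _ ≤ 2 * (1 + m) ^ 2 * (1 + (m - u) + (m - u) ^ 2 / 2) := by
      have : 0 ≤ (2 * m + m ^ 2) * (2 * (m - u) + (m - u) ^ 2) := by positivity
      linarith
    _ ≤ 2 * (1 + m) ^ 2 * exp (m - u) := by
      gcongr
      exact quadratic_le_exp_of_nonneg hs

lemma two_mul_mul_mul_one_add_mean_sq_le {x y : ℝ} (hx : 0 ≤ x) (hy : 0 ≤ y) :
    2 * x * y * (1 + (x + y) / 2) ^ 2 ≤
      (x + y) ^ 2 * exp ((x + y) / 2) - x ^ 2 * exp ((x - y) / 2) -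
        y ^ 2 * exp (-((x - y) / 2)) := by
  have hd : |(x - y) / 2| ≤ (x + y) / 2 := abs_le.2 ⟨by linarith, by linarith⟩
  convert two_mul_sq_sub_sq_mul_one_add_sq_le hd using 1 <;> ring

lemma mul_mul_two_add_four_mul_add_sq_lt {x y b : ℝ} (hx : 0 < x) (hy : 0 < y)
    (hb : (x + y) / 2 ≤ b) :
    x * y * (2 + 4 * (x + y - b) + (x + y - b) ^ 2) <
      (x + y) ^ 2 * exp b - x ^ 2 * exp (b - y) - y ^ 2 * exp (b - x) := by
  have hquad : 2 + 4 * (x + y - b) + (x + y - b) ^ 2 <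
      2 * (1 + (x + y) / 2) ^ 2 * exp (b - (x + y) / 2) := by
    convert two_add_four_mul_add_sq_lt_mul_exp_sub (m := (x + y) / 2) (u := x + y - b)
      (by positivity) (by linarith) using 3
    ring
  have hexp {c e : ℝ} (he : c = b - (x + y) / 2 + e) :
      exp c = exp (b - (x + y) / 2) * exp e := by
    rw [he, exp_add]
  calc x * y * (2 + 4 * (x + y - b) + (x + y - b) ^ 2)
      < x * y * (2 * (1 + (x + y) / 2) ^ 2 * exp (b - (x + y) / 2)) := by gcongr
    _ = exp (b - (x + y) / 2) * (2 * x * y * (1 + (x + y) / 2) ^ 2) := by ring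
    _ ≤ exp (b - (x + y) / 2) *
          ((x + y) ^ 2 * exp ((x + y) / 2) - x ^ 2 * exp ((x - y) / 2) -
            y ^ 2 * exp (-((x - y) / 2))) := by
      gcongr
      exact two_mul_mul_mul_one_add_mean_sq_le hx.le hy.le
    _ = (x + y) ^ 2 * exp b - x ^ 2 * exp (b - y) - y ^ 2 * exp (b - x) := by
      rw [hexp (c := b) (e := (x + y) / 2) (by ring),
        hexp (c := b - y) (e := (x - y) / 2) (by ring),
        hexp (c := b - x) (e := -((x - y) / 2)) (by ring)]
      ring

theorem stmt13 (w₁ w₂ a : ℝ) (hw₁ : 0 < w₁) (hw₂ : 0 < w₂)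
    (ha : (w₁ + w₂) / 2 ≤ a) (t : ℝ) (ht : 0 < t) :
    2 * w₁ * w₂ + 4 * w₁ * w₂ * (w₁ + w₂ - a) * t +
        w₁ * w₂ * (w₁ + w₂ - a) ^ 2 * t ^ 2 <
      (w₁ + w₂) ^ 2 * Real.exp (a * t) - w₁ ^ 2 * Real.exp ((a - w₂) * t) -
        w₂ ^ 2 * Real.exp ((a - w₁) * t) := by
  have hb : (w₁ * t + w₂ * t) / 2 ≤ a * t := by
    linarith [mul_le_mul_of_nonneg_right ha ht.le]
  have hscaled := mul_mul_two_add_four_mul_add_sq_lt (mul_pos hw₁ ht) (mul_pos hw₂ ht) hb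
  rw [← sub_mul, ← sub_mul] at hscaled
  refine lt_of_mul_lt_mul_left ?_ (sq_nonneg t)
  linarith
end
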